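/- arXiv:math/9905209 — 4 statements merged into one kernel-verified Lean document; each statement's English description precedes it below -/
import Mathlib

section
/- If H is a finitely generated subgroup of M(Φ) that contains t, then there exist finite tuples a_1, …, a_m ∈ 𝔽 and b_1, …, b_r ∈ 𝔽 and elements w_1, …, w_m of the free group on generators x_1, …, x_m, y_1, …, y_r such that: (i) H is generated by {t} ∪ {ι(a_1), …, ι(a_m)}; (ii) for each j, evaluating w_j under x_j ↦ a_j, y_k ↦ b_k gives Φ(a_j) in 𝔽; (iii) the subgroup of 𝔽 generated by {a_1, …, a_m} ∪ {Φ(a_1), …, Φ(a_m)} equals the subgroup generated by {a_1, …, a_m} ∪ {b_1, …, b_r}; and (iv) the map sending s ↦ t, x_j ↦ ι(a_j), y_k ↦ ι(b_k) induces a group isomorphism from the group with presentation ⟨s, x_1, …, x_m, y_1, …, y_r | s x_j s⁻¹ w_j⁻¹ (1 ≤ j ≤ m)⟩ onto H. -/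
/-- The relators `t eᵢ t⁻¹ Φ(eᵢ)⁻¹` of the mapping torus of an endomorphism `Φ` of the
free group on `I`; the generator `none` plays the role of the stable letter `t`. -/
def mtRels {I : Type} (Φ : FreeGroup I →* FreeGroup I) : Set (FreeGroup (Option I)) :=
  Set.range fun i : I =>
    FreeGroup.of (none : Option I) * FreeGroup.of (some i) * (FreeGroup.of (none : Option I))⁻¹ *
      (FreeGroup.map some (Φ (FreeGroup.of i)))⁻¹

/-- The mapping torus `M(Φ) = ⟨t, eᵢ (i ∈ I) | t eᵢ t⁻¹ Φ(eᵢ)⁻¹ (i ∈ I)⟩`. -/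
abbrev MT {I : Type} (Φ : FreeGroup I →* FreeGroup I) : Type := PresentedGroup (mtRels Φ)

/-- The stable letter `t` of the mapping torus. -/
def mtT {I : Type} (Φ : FreeGroup I →* FreeGroup I) : MT Φ := PresentedGroup.of none

/-- The natural homomorphism `ι : 𝔽 → M(Φ)`. -/
def mtι {I : Type} (Φ : FreeGroup I →* FreeGroup I) : FreeGroup I →* MT Φ :=
  (PresentedGroup.mk (mtRels Φ)).comp (FreeGroup.map some)

/-- The relators `s x_j s⁻¹ w_j⁻¹ (1 ≤ j ≤ m)` of a preferred presentation
`⟨s, x₁, …, x_m, y₁, …, y_r | s x_j s⁻¹ w_j⁻¹⟩`: the generator `none` is the stable letter `s`,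
`some (Sum.inl j)` is `x_j` and `some (Sum.inr k)` is `y_k`. -/
def prefRels (m r : ℕ) (w : Fin m → FreeGroup (Fin m ⊕ Fin r)) :
    Set (FreeGroup (Option (Fin m ⊕ Fin r))) :=
  Set.range fun j : Fin m =>
    FreeGroup.of (none : Option (Fin m ⊕ Fin r)) * FreeGroup.of (some (Sum.inl j)) *
      (FreeGroup.of (none : Option (Fin m ⊕ Fin r)))⁻¹ *
      (FreeGroup.map some (w j))⁻¹

/-!
Call `P ≤ 𝔽` tight if it is a free factor of `step Φ P = ⟨P, Φ(P)⟩`. Replacing a finitely generated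
`P` again and again by the smallest free factor of `step Φ P` containing it leads to a tight
subgroup: the union of the chain is free, so the chain stays in a finitely generated free factor
of it. Let `b₁, …, b_r` complete a basis of a tight `P` to one of `step Φ P`, with `P` chosen so
that `r` is minimal among the tight subgroups that arise in this way. If all the elements `Φⁱ(b_k)`
are free generators over `P`, then conjugation by `t` shifts them, and normal forms `t⁻ⁱ z tʲ` show
that `⟨s, x, y | s x_j s⁻¹ w_j⁻¹⟩` embeds in the mapping torus.

Freeness over some `step^N P` follows by a rank count once the rank of `stepⁿ P` is at least `n r`,
since the rank grows by at most `r` at each step. For the lower bound, take a tight `Q ⊇ stepⁿ P`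
and divide the abelianization of `step Φ Q`, with coefficients in a field, by the relations
`Φ(y) = x y` for `y ∈ Q`, where `x` is transcendental. The quotient has dimension at least
`rank (step Φ Q) - rank Q ≥ r`, and the `r` classes of the `b_k` span it, so they are a basis. Hence
the classes `xⁱ b_k` of the `Φⁱ(b_k) ∈ stepⁿ P`, for `i < n`, are linearly independent over `ℤ`.
-/

namespace MappingTorus

open Function Subgroup Module

universe u v

section ResidualFiniteness

theorem exists_perm_extending_mulLeft {A : Type*} [Group A] (S : Finset A) (a : A) :
    ∃ e : Equiv.Perm S, ∀ x y : S, (y : A) = a * x → e x = y := by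
  classical
  let e : {x : S // a * x ∈ S} ≃ {x : S // a⁻¹ * x ∈ S} :=
    { toFun := fun x => ⟨⟨a * x, x.2⟩, by simp⟩
      invFun := fun x => ⟨⟨a⁻¹ * x, x.2⟩, by simp⟩
      left_inv := fun x => by simp
      right_inv := fun x => by simp }
  refine ⟨e.extendSubtype, fun x y h => ?_⟩
  rw [e.extendSubtype_apply_of_mem x (h ▸ y.2)]
  exact Subtype.ext h.symm

/- The generators act on the finite set of suffixes of the reduced word of `w` by partial
translations; extending these to permutations gives an action in which `w` moves `1`. -/
instance freeGroup_residuallyFinite {α : Type*} : Group.ResiduallyFinite (FreeGroup α) := by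
  classical
  refine Group.residuallyFinite_of_forall_exists_finite_monoidHom fun w hw => ?_
  let S : Finset (FreeGroup α) := (w.toWord.tails.map FreeGroup.mk).toFinset
  have mem_S {l : List (α × Bool)} (hl : l <:+ w.toWord) : FreeGroup.mk l ∈ S := by
    simpa [S] using ⟨l, hl, rfl⟩
  choose e he using fun a : α => exists_perm_extending_mulLeft S (FreeGroup.of a)
  have he_inv (a : α) (x y : S) (h : (y : FreeGroup α) = (FreeGroup.of a)⁻¹ * x) :
      (e a)⁻¹ x = y :=
    Equiv.Perm.inv_eq_iff_eq.2 (he a y x (by rw [h, mul_inv_cancel_left])).symm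
  have apply_one (l : List (α × Bool)) (hl : l <:+ w.toWord) :
      FreeGroup.lift e (FreeGroup.mk l) ⟨1, mem_S List.nil_suffix⟩ =
        ⟨FreeGroup.mk l, mem_S hl⟩ := by
    induction l with
    | nil => rfl
    | cons p l ih =>
      rw [FreeGroup.lift_mk, List.map_cons, List.prod_cons, ← FreeGroup.lift_mk,
        Equiv.Perm.mul_apply, ih ((List.suffix_cons p l).trans hl)]
      obtain ⟨a, _ | _⟩ := p
      · exact he_inv a _ _ rfl
      · exact he a _ _ rfl
  refine ⟨Equiv.Perm S, inferInstance, inferInstance, FreeGroup.lift e, fun h => hw ?_⟩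
  simpa [FreeGroup.mk_toWord, h] using (apply_one w.toWord List.suffix_rfl).symm

theorem finite_monoidHom_of_fg {A B : Type*} [Group A] [Group.FG A] [Group B] [Finite B] :
    Finite (A →* B) := by
  obtain ⟨S, hS⟩ := Group.fg_def.1 ‹Group.FG A›
  refine Finite.of_injective (fun (φ : A →* B) (s : S) => φ s) fun φ ψ h => ?_
  exact MonoidHom.eq_of_eqOn_dense hS fun s hs => congrFun h ⟨s, hs⟩

theorem injective_of_surjective_of_residuallyFinite {A : Type*} [Group A] [Group.FG A]
    [Group.ResiduallyFinite A] {f : A →* A} (hf : Surjective f) : Injective f := by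
  refine (injective_iff_map_eq_one f).2 fun w hw => ?_
  by_contra hne
  obtain ⟨N, hN⟩ := Group.exists_finiteIndexNormalSubgroup_notMem w hne
  have := finite_monoidHom_of_fg (A := A) (B := A ⧸ N.toSubgroup)
  have comp_injective : Injective fun φ : A →* A ⧸ N.toSubgroup => φ.comp f :=
    fun _ _ h => (MonoidHom.cancel_right hf).1 h
  obtain ⟨φ, hφ⟩ := Finite.injective_iff_surjective.1 comp_injective (QuotientGroup.mk' _)
  refine hN ((QuotientGroup.eq_one_iff w).1 ?_)
  calc (w : A ⧸ N.toSubgroup) = φ (f w) := (DFunLike.congr_fun hφ w).symm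
    _ = 1 := by rw [hw, map_one]

end ResidualFiniteness

section FreelyGenerates

variable {G : Type u} [Group G] {α β : Type*}

theorem closure_range_sumElim (f : α → G) (g : β → G) :
    closure (Set.range (Sum.elim f g)) = closure (Set.range f) ⊔ closure (Set.range g) := by
  rw [Set.Sum.elim_range, Subgroup.closure_union]

/-- The family `f` is a basis of the free subgroup `K`. This is the unbundled form of a
`FreeGroupBasis` of `K`, with the basis elements living in the ambient group. -/
structure FreelyGenerates (f : α → G) (K : Subgroup G) : Prop where
  injective : Injective (FreeGroup.lift f)
  closure_eq : closure (Set.range f) = K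

namespace FreelyGenerates

variable {f : α → G} {g : β → G} {K : Subgroup G}

theorem range_lift (hf : FreelyGenerates f K) : (FreeGroup.lift f).range = K := by
  rw [FreeGroup.range_lift_eq_closure, hf.closure_eq]

theorem mem (hf : FreelyGenerates f K) (a : α) : f a ∈ K :=
  hf.closure_eq ▸ subset_closure ⟨a, rfl⟩

/-- The isomorphism from the abstract free group on a basis of `K` onto `K`. -/
noncomputable def mulEquiv (hf : FreelyGenerates f K) : FreeGroup α ≃* K :=
  (MonoidHom.ofInjective hf.injective).trans (MulEquiv.subgroupCongr hf.range_lift)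

@[simp]
theorem coe_mulEquiv_apply (hf : FreelyGenerates f K) (w : FreeGroup α) :
    (hf.mulEquiv w : G) = FreeGroup.lift f w := rfl

@[simp]
theorem lift_mulEquiv_symm (hf : FreelyGenerates f K) (x : K) :
    FreeGroup.lift f (hf.mulEquiv.symm x) = x := by
  rw [← hf.coe_mulEquiv_apply, MulEquiv.apply_symm_apply]

theorem mulEquiv_symm_apply (hf : FreelyGenerates f K) (a : α) :
    hf.mulEquiv.symm ⟨f a, hf.mem a⟩ = FreeGroup.of a := by
  rw [MulEquiv.symm_apply_eq]
  exact Subtype.ext FreeGroup.lift_apply_of.symm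

theorem hom_ext {H : Type*} [Group H] (hf : FreelyGenerates f K) {φ ψ : K →* H}
    (h : ∀ a, φ ⟨f a, hf.mem a⟩ = ψ ⟨f a, hf.mem a⟩) : φ = ψ := by
  have mulEquiv_of (a : α) : hf.mulEquiv (.of a) = ⟨f a, hf.mem a⟩ := by
    rw [← hf.mulEquiv_symm_apply, MulEquiv.apply_symm_apply]
  refine (MonoidHom.cancel_right (f := hf.mulEquiv.toMonoidHom) hf.mulEquiv.surjective).1 ?_
  refine FreeGroup.ext_hom _ _ fun a => ?_
  simpa [mulEquiv_of] using h a

theorem comp_equiv (hf : FreelyGenerates f K) (e : β ≃ α) : FreelyGenerates (f ∘ e) K where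
  injective := by
    have h : FreeGroup.lift (f ∘ e) = (FreeGroup.lift f).comp (FreeGroup.map e) := by ext; simp
    rw [h]
    exact hf.injective.comp (FreeGroup.map_injective e.injective)
  closure_eq := by rw [e.surjective.range_comp, hf.closure_eq]

theorem of_sumElim (h : FreelyGenerates (Sum.elim f g) K) :
    FreelyGenerates f (closure (Set.range f)) where
  injective := by
    have hf : FreeGroup.lift f =
        (FreeGroup.lift (Sum.elim f g)).comp (FreeGroup.map Sum.inl) := by ext; simp
    rw [hf]
    exact h.injective.comp (FreeGroup.map_injective Sum.inl_injective)
  closure_eq := rfl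

theorem sumElim_congr_left {γ : Type*} {f' : γ → G} {D : Subgroup G}
    (h : FreelyGenerates (Sum.elim f g) K) (hf : FreelyGenerates f D)
    (hf' : FreelyGenerates f' D) : FreelyGenerates (Sum.elim f' g) K where
  injective := by
    let e : FreeGroup γ ≃* FreeGroup α := hf'.mulEquiv.trans hf.mulEquiv.symm
    let E : FreeGroup (γ ⊕ β) →* FreeGroup (α ⊕ β) :=
      FreeGroup.lift (Sum.elim (fun c => FreeGroup.map Sum.inl (e (.of c))) (.of ∘ Sum.inr))
    let E' : FreeGroup (α ⊕ β) →* FreeGroup (γ ⊕ β) :=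
      FreeGroup.lift (Sum.elim (fun a => FreeGroup.map Sum.inl (e.symm (.of a))) (.of ∘ Sum.inr))
    have E'_map_inl : E'.comp (FreeGroup.map Sum.inl) =
        (FreeGroup.map Sum.inl).comp e.symm.toMonoidHom := by ext; simp [E']
    have E'_comp_E : E'.comp E = MonoidHom.id _ := by
      ext (c | b)
      · simpa [E] using DFunLike.congr_fun E'_map_inl (e (.of c))
      · simp [E, E']
    have lift_comp_inl : (FreeGroup.lift (Sum.elim f g)).comp (FreeGroup.map Sum.inl) =
        FreeGroup.lift f := by ext; simp
    have lift_comp_E : (FreeGroup.lift (Sum.elim f g)).comp E =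
        FreeGroup.lift (Sum.elim f' g) := by
      ext (c | b)
      · simpa [E, e] using DFunLike.congr_fun lift_comp_inl (e (.of c))
      · simp [E]
    rw [← lift_comp_E]
    exact h.injective.comp (LeftInverse.injective (DFunLike.congr_fun E'_comp_E))
  closure_eq := by
    rw [← h.closure_eq, closure_range_sumElim, closure_range_sumElim, hf.closure_eq, hf'.closure_eq]

end FreelyGenerates

theorem exists_freelyGenerates (K : Subgroup G) [IsFreeGroup K] :
    ∃ f : IsFreeGroup.Generators K → G, FreelyGenerates f K := by
  let e := IsFreeGroup.mulEquiv K
  have lift_eq : FreeGroup.lift (fun a => (e (.of a) : G)) = K.subtype.comp e.toMonoidHom := by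
    ext; simp
  refine ⟨fun a => e (.of a), ?_, ?_⟩
  · rw [lift_eq]
    exact Subtype.val_injective.comp e.injective
  · rw [← FreeGroup.range_lift_eq_closure, lift_eq, MonoidHom.range_comp,
      MonoidHom.range_eq_top.2 e.surjective, ← MonoidHom.range_eq_map, range_subtype]

end FreelyGenerates

section Rank

variable {G : Type u} [Group G] {α β : Type*} {f : α → G} {K : Subgroup G}

theorem toAdd_map_mem_of_mem_closure {A R E : Type*} [Group A] [Ring R] [AddCommGroup E]
    [Module R E] {S : Set A} (φ : A →* Multiplicative E) (N : Submodule R E)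
    (hS : ∀ x ∈ S, (φ x).toAdd ∈ N) {x : A} (hx : x ∈ closure S) : (φ x).toAdd ∈ N := by
  have hle : closure S ≤ (AddSubgroup.toSubgroup N.toAddSubgroup).comap φ := (closure_le _).2 hS
  exact hle hx

theorem natCard_le_of_linearIndependent_map {A R E ι : Type*} [Group A] [CommRing R]
    [Nontrivial R] [AddCommGroup E] [Module R E] (φ : A →* Multiplicative E) [Finite β] {v : β → A}
    (hv : closure (Set.range v) = ⊤) {x : ι → A}
    (hx : LinearIndependent R fun i => (φ (x i)).toAdd) :
    Finite ι ∧ Nat.card ι ≤ Nat.card β := by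
  have range_le : Set.range (fun i => (φ (x i)).toAdd) ≤
      Submodule.span R (Set.range fun b => (φ (v b)).toAdd) := by
    rintro _ ⟨i, rfl⟩
    refine toAdd_map_mem_of_mem_closure φ _ ?_ (hv ▸ mem_top (x i))
    rintro _ ⟨b, rfl⟩
    exact Submodule.subset_span ⟨b, rfl⟩
  have card_le : Cardinal.mk ι ≤ Nat.card β := by
    have := Fintype.ofFinite (Set.range fun b => (φ (v b)).toAdd)
    refine (linearIndependent_le_span' _ hx _ range_le).trans ?_
    rw [← Nat.card_eq_fintype_card]
    exact_mod_cast Finite.card_range_le _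
  have : Finite ι := Cardinal.lt_aleph0_iff_finite.1 (card_le.trans_lt Cardinal.natCast_lt_aleph0)
  exact ⟨this, by rwa [← Nat.cast_card, Nat.cast_le] at card_le⟩

theorem FreelyGenerates.natCard_le (hf : FreelyGenerates f K) [Finite β] {v : β → G}
    (hv : closure (Set.range v) = K) : Finite α ∧ Nat.card α ≤ Nat.card β := by
  let φ : FreeGroup α →* Multiplicative (α →₀ ℤ) :=
    FreeGroup.lift fun a => .ofAdd (Finsupp.single a 1)
  have hv_mem (b : β) : v b ∈ K := hv ▸ subset_closure ⟨b, rfl⟩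
  refine natCard_le_of_linearIndependent_map (R := ℤ) φ (x := FreeGroup.of)
    (v := fun b => hf.mulEquiv.symm ⟨v b, hv_mem b⟩) ?_ ?_
  · refine map_injective hf.injective ?_
    rw [MonoidHom.map_closure, ← Set.range_comp, ← MonoidHom.range_eq_map, hf.range_lift]
    simpa [comp_def] using hv
  · simpa [φ] using Finsupp.linearIndependent_single_one ℤ α

theorem FreelyGenerates.finite (hf : FreelyGenerates f K) (hK : K.FG) : Finite α := by
  obtain ⟨S, rfl⟩ := hK
  exact (hf.natCard_le (v := ((↑) : S → G)) (by simp)).1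

theorem FreelyGenerates.fg [Finite α] (hf : FreelyGenerates f K) : K.FG :=
  hf.closure_eq ▸ ⟨_, by rw [Set.Finite.coe_toFinset (Set.finite_range f)]⟩

theorem FreelyGenerates.of_natCard_le (hf : FreelyGenerates f K) [Finite β] {v : β → G}
    (hv : closure (Set.range v) = K) (hcard : Nat.card β ≤ Nat.card α) : FreelyGenerates v K where
  injective := by
    obtain ⟨_, hcard'⟩ := hf.natCard_le hv
    obtain ⟨e⟩ := (Finite.card_eq (α := α) (β := β)).1 (hcard'.antisymm hcard)
    have hf' := hf.comp_equiv e.symm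
    let π : FreeGroup β →* K :=
      (FreeGroup.lift v).codRestrict K fun w => by
        rw [← hv, ← FreeGroup.range_lift_eq_closure]; exact ⟨w, rfl⟩
    have π_surjective : Surjective π := fun ⟨x, hx⟩ => by
      rw [← hv, ← FreeGroup.range_lift_eq_closure] at hx
      exact hx.imp fun w hw => Subtype.ext hw
    have comp_injective : Injective (hf'.mulEquiv.symm ∘ π) :=
      injective_of_surjective_of_residuallyFinite
        (f := hf'.mulEquiv.symm.toMonoidHom.comp π) (hf'.mulEquiv.symm.surjective.comp π_surjective)
    exact Subtype.val_injective.comp comp_injective.of_comp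
  closure_eq := hv

/-- The rank of a free subgroup `K`; it is `0` when the rank is infinite. -/
noncomputable def freeRank (K : Subgroup G) [IsFreeGroup K] : ℕ :=
  Nat.card (IsFreeGroup.Generators K)

theorem FreelyGenerates.freeRank_eq [IsFreeGroup K] (hf : FreelyGenerates f K) :
    freeRank K = Nat.card α :=
  Nat.card_congr (Equiv.ofFreeGroupEquiv ((IsFreeGroup.mulEquiv K).trans hf.mulEquiv.symm))

theorem exists_fin_freelyGenerates [IsFreeGroup K] (hK : K.FG) :
    ∃ f : Fin (freeRank K) → G, FreelyGenerates f K := by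
  obtain ⟨f, hf⟩ := exists_freelyGenerates K
  have := hf.finite hK
  exact ⟨_, hf.comp_equiv (Finite.equivFin _).symm⟩

end Rank

section FreeFactor

variable {G : Type u} [Group G] {C D K : Subgroup G}

/-- `D` is a free factor of `K`: some basis of `D` extends to a basis of `K`. -/
def IsFreeFactor (D K : Subgroup G) : Prop :=
  ∃ (α β : Type u) (f : α → G) (g : β → G),
    FreelyGenerates (Sum.elim f g) K ∧ closure (Set.range f) = D

theorem FreelyGenerates.isFreeFactor_closure_image {α : Type u} {f : α → G}
    (hf : FreelyGenerates f K) (s : Set α) : IsFreeFactor (closure (f '' s)) K := by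
  classical
  refine ⟨s, ↥sᶜ, fun i => f i, fun i => f i, ?_, by rw [Set.image_eq_range]⟩
  convert hf.comp_equiv (Equiv.Set.sumCompl s) using 1
  ext (i | i) <;> simp

namespace IsFreeFactor

theorem refl (K : Subgroup G) [IsFreeGroup K] : IsFreeFactor K K := by
  obtain ⟨f, hf⟩ := exists_freelyGenerates K
  simpa [hf.closure_eq] using hf.isFreeFactor_closure_image Set.univ

theorem le (h : IsFreeFactor D K) : D ≤ K := by
  obtain ⟨α, β, f, g, hfg, rfl⟩ := h
  rw [← hfg.closure_eq, closure_range_sumElim]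
  exact le_sup_left

theorem trans (hCD : IsFreeFactor C D) (hDK : IsFreeFactor D K) : IsFreeFactor C K := by
  obtain ⟨α, β, f, g, hfg, rfl⟩ := hCD
  obtain ⟨γ, δ, f', g', hfg', rfl⟩ := hDK
  have h := (hfg'.sumElim_congr_left hfg'.of_sumElim hfg).comp_equiv (Equiv.sumAssoc α β δ).symm
  refine ⟨α, β ⊕ δ, f, Sum.elim g g', ?_, rfl⟩
  convert h using 1
  ext (a | b | d) <;> rfl

theorem map {H : Type u} [Group H] {φ : G →* H} (hφ : Injective φ) (h : IsFreeFactor D K) :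
    IsFreeFactor (D.map φ) (K.map φ) := by
  obtain ⟨α, β, f, g, hfg, rfl⟩ := h
  have lift_eq : FreeGroup.lift (φ ∘ Sum.elim f g) = φ.comp (FreeGroup.lift (Sum.elim f g)) := by
    ext; simp
  refine ⟨α, β, φ ∘ f, φ ∘ g, ⟨?_, ?_⟩, ?_⟩
  · rw [← Sum.comp_elim, lift_eq]
    exact hφ.comp hfg.injective
  · rw [← Sum.comp_elim, Set.range_comp, ← MonoidHom.map_closure, hfg.closure_eq]
  · rw [Set.range_comp, MonoidHom.map_closure]

theorem fg (h : IsFreeFactor D K) (hK : K.FG) : D.FG := by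
  obtain ⟨α, β, f, g, hfg, rfl⟩ := h
  have := hfg.finite hK
  have := Finite.sum_left β (α := α)
  exact hfg.of_sumElim.fg

theorem exists_fin_complement [IsFreeGroup D] [IsFreeGroup K] (h : IsFreeFactor D K) (hK : K.FG) :
    ∃ (r : ℕ) (b : Fin r → G), freeRank K = freeRank D + r ∧ D ⊔ closure (Set.range b) = K := by
  obtain ⟨α, β, f, g, hfg, rfl⟩ := h
  have := hfg.finite hK
  have := Finite.sum_left β (α := α)
  have := Finite.sum_right α (β := β)
  refine ⟨Nat.card β, g ∘ (Finite.equivFin β).symm, ?_, ?_⟩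
  · rw [hfg.freeRank_eq, hfg.of_sumElim.freeRank_eq, Nat.card_sum]
  · rw [(Finite.equivFin β).symm.surjective.range_comp, ← closure_range_sumElim, hfg.closure_eq]

theorem eq_of_freeRank_le [IsFreeGroup D] [IsFreeGroup K] (h : IsFreeFactor D K) (hK : K.FG)
    (hrank : freeRank K ≤ freeRank D) : D = K := by
  obtain ⟨r, b, hr, hb⟩ := h.exists_fin_complement hK
  obtain rfl : r = 0 := by lia
  simpa using hb

end IsFreeFactor

end FreeFactor

section Schreier

variable {ι : Type*}

section PathProduct

variable {A T : Type*} [MulAction (FreeGroup ι) A] [Group T] (γ : A → ι → T)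

/-- Label the edge `(of i)⁻¹ • x → x` of the action graph of `FreeGroup ι` on `A` by `γ x i`.
`pathProduct γ w x` is the product of the labels along the path with label `w` that ends at `x`. -/
noncomputable def pathProduct (w : FreeGroup ι) : A → T :=
  (FreeGroup.lift (fun i => ⟨fun x => γ x i, FreeGroup.of i⟩) w :
    (A → T) ⋊[mulAutArrow] FreeGroup ι).left

theorem pathProduct_of (i : ι) (x : A) : pathProduct γ (FreeGroup.of i) x = γ x i := by
  simp [pathProduct]

theorem pathProduct_mul (v w : FreeGroup ι) (x : A) :
    pathProduct γ (v * w) x = pathProduct γ v x * pathProduct γ w (v⁻¹ • x) := by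
  have right_eq : (SemidirectProduct.rightHom.comp (FreeGroup.lift fun i =>
      (⟨fun x => γ x i, FreeGroup.of i⟩ : (A → T) ⋊[mulAutArrow] FreeGroup ι))) =
      MonoidHom.id _ := by ext; simp
  have := DFunLike.congr_fun right_eq v
  simp only [MonoidHom.comp_apply, SemidirectProduct.rightHom_eq_right, MonoidHom.id_apply] at this
  simp only [pathProduct, map_mul, SemidirectProduct.mul_left, Pi.mul_apply, this]
  rfl

theorem pathProduct_one (x : A) : pathProduct γ 1 x = 1 := by
  simp [pathProduct]

theorem pathProduct_inv (w : FreeGroup ι) (x : A) :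
    pathProduct γ w⁻¹ x = (pathProduct γ w (w • x))⁻¹ := by
  have h := pathProduct_mul γ w⁻¹ w x
  rw [inv_mul_cancel, pathProduct_one, inv_inv] at h
  exact eq_inv_of_mul_eq_one_left h.symm

end PathProduct

theorem mk_mem_closure_image_of {s : Set ι} {l : List (ι × Bool)} (hl : ∀ p ∈ l, p.1 ∈ s) :
    FreeGroup.mk l ∈ closure (FreeGroup.of '' s) := by
  rw [← FreeGroup.lift_of_apply (FreeGroup.mk l), FreeGroup.lift_mk]
  refine Subgroup.list_prod_mem _ fun g hg => ?_
  obtain ⟨p, hp, rfl⟩ := List.mem_map.1 hg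
  have hof : FreeGroup.of p.1 ∈ closure (FreeGroup.of '' s) := subset_closure ⟨_, hl p hp, rfl⟩
  cases p.2
  · exact inv_mem hof
  · exact hof

theorem exists_mk_eq_of_mem_closure_image_of {s : Set ι} {w : FreeGroup ι}
    (hw : w ∈ closure (FreeGroup.of '' s)) :
    ∃ l : List (ι × Bool), FreeGroup.mk l = w ∧ ∀ p ∈ l, p.1 ∈ s := by
  have closure_eq : closure (FreeGroup.of '' s) = (FreeGroup.map ((↑) : s → ι)).range := by
    rw [FreeGroup.range_map]; simp
  obtain ⟨⟨l⟩, rfl⟩ := closure_eq ▸ hw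
  refine ⟨l.map fun p => ((p.1 : ι), p.2), rfl, ?_⟩
  simp only [List.mem_map]
  rintro _ ⟨p, -, rfl⟩
  exact p.1.2

/-- The well-order on words that compares first the number of letters outside `s`, then shortlex. -/
def WordLT (s : Set ι) (l l' : List (ι × Bool)) : Prop :=
  letI := Classical.decPred (· ∈ s)
  Prod.Lex (· < ·) (List.Shortlex WellOrderingRel)
    (l.countP (·.1 ∉ s), l) (l'.countP (·.1 ∉ s), l')

namespace WordLT

variable {s : Set ι} {l l' : List (ι × Bool)}

theorem wellFounded (s : Set ι) : WellFounded (WordLT s) :=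
  InvImage.wf _ (WellFounded.prod_lex wellFounded_lt
    (List.Shortlex.wf WellOrderingRel.isWellOrder.wf))

theorem append_left (h : WordLT s l l') (m : List (ι × Bool)) : WordLT s (m ++ l) (m ++ l') := by
  simp only [WordLT, Prod.lex_def, List.countP_append] at h ⊢
  exact h.imp (by lia) fun h => ⟨by lia, h.2.append_left _⟩

theorem eq_of_not (h : ¬ WordLT s l l') (h' : ¬ WordLT s l' l) : l = l' := by
  simp only [WordLT, Prod.lex_def, not_or, not_and] at h h'
  have hcount := le_antisymm (not_lt.1 h'.1) (not_lt.1 h.1)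
  exact Std.Trichotomous.trichotomous (r := List.Shortlex WellOrderingRel) l l' (h.2 hcount)
    (h'.2 hcount.symm)

theorem forall_mem_of_not (h : ¬ WordLT s l l') (hl : ∀ p ∈ l, p.1 ∈ s) : ∀ p ∈ l', p.1 ∈ s := by
  classical
  simp only [WordLT, Prod.lex_def, not_or, not_lt] at h
  have hcount : l.countP (·.1 ∉ s) = 0 := List.countP_eq_zero.2 (by simpa using hl)
  have hcount' : l'.countP (·.1 ∉ s) = 0 := Nat.le_zero.1 (hcount ▸ h.1)
  simpa using hcount'

end WordLT

variable {K : Subgroup (FreeGroup ι)}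

/-- A transversal of the left cosets of `K`, given by words and closed under taking suffixes. -/
structure IsSchreierTransversal (T : FreeGroup ι ⧸ K → List (ι × Bool)) : Prop where
  mk_eq (x : FreeGroup ι ⧸ K) : (FreeGroup.mk (T x) : FreeGroup ι ⧸ K) = x
  eq_of_suffix {x : FreeGroup ι ⧸ K} {l : List (ι × Bool)} (hl : l <:+ T x) :
    T (FreeGroup.mk l : FreeGroup ι) = l

variable (K) in
theorem exists_isSchreierTransversal (s : Set ι) :
    ∃ T : FreeGroup ι ⧸ K → List (ι × Bool), IsSchreierTransversal T ∧
      ∀ w ∈ closure (FreeGroup.of '' s), ∀ p ∈ T (w : FreeGroup ι), p.1 ∈ s := by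
  let words (x : FreeGroup ι ⧸ K) : Set (List (ι × Bool)) :=
    {l | (FreeGroup.mk l : FreeGroup ι ⧸ K) = x}
  have words_nonempty (x) : (words x).Nonempty := by
    classical
    obtain ⟨w, rfl⟩ := QuotientGroup.mk_surjective x
    exact ⟨w.toWord, by simp [words, FreeGroup.mk_toWord]⟩
  let T (x) := (WordLT.wellFounded s).min (words x) (words_nonempty x)
  have mk_T (x) : (FreeGroup.mk (T x) : FreeGroup ι ⧸ K) = x :=
    (WordLT.wellFounded s).min_mem _ (words_nonempty x)
  have not_lt_T {x l} (hl : l ∈ words x) : ¬ WordLT s l (T x) :=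
    (WordLT.wellFounded s).not_lt_min _ hl
  refine ⟨T, ⟨mk_T, ?_⟩, fun w hw => ?_⟩
  · rintro x l ⟨m, hm⟩
    have append_mem : m ++ T (FreeGroup.mk l : FreeGroup ι) ∈ words x := by
      calc ((FreeGroup.mk (m ++ T (FreeGroup.mk l : FreeGroup ι)) : FreeGroup ι) : FreeGroup ι ⧸ K)
        _ = FreeGroup.mk m •
              (FreeGroup.mk (T (FreeGroup.mk l : FreeGroup ι)) : FreeGroup ι ⧸ K) := by
          rw [← FreeGroup.mul_mk]; rfl
        _ = (FreeGroup.mk (m ++ l) : FreeGroup ι) := by rw [mk_T, ← FreeGroup.mul_mk]; rfl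
        _ = x := by rw [hm, mk_T]
    refine WordLT.eq_of_not (fun h => not_lt_T append_mem ?_) (not_lt_T rfl)
    exact hm ▸ h.append_left m
  · obtain ⟨l, rfl, hl⟩ := exists_mk_eq_of_mem_closure_image_of hw
    exact WordLT.forall_mem_of_not (not_lt_T rfl) hl

/-- The element of `K` read along the closed path that follows the transversal to
`(of i)⁻¹ • x`, crosses the edge `i` to `x`, and returns along the transversal. -/
def schreierGenerator (T : FreeGroup ι ⧸ K → List (ι × Bool)) (x : FreeGroup ι ⧸ K) (i : ι) :
    FreeGroup ι :=
  (FreeGroup.mk (T x))⁻¹ * FreeGroup.of i * FreeGroup.mk (T ((FreeGroup.of i)⁻¹ • x))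

/-- The nontrivial Schreier generators. -/
def schreierBasis (T : FreeGroup ι ⧸ K → List (ι × Bool))
    (e : {e : (FreeGroup ι ⧸ K) × ι // schreierGenerator T e.1 e.2 ≠ 1}) : FreeGroup ι :=
  schreierGenerator T e.1.1 e.1.2

theorem closure_image_schreierBasis (T : FreeGroup ι ⧸ K → List (ι × Bool))
    (Y : Set (FreeGroup ι ⧸ K)) (s : Set ι) :
    closure (schreierBasis T '' {e | e.1.1 ∈ Y ∧ e.1.2 ∈ s}) =
      closure (Set.image2 (schreierGenerator T) Y s) := by
  rw [← closure_sdiff_one (Set.image2 _ _ _)]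
  congr 1
  ext g
  constructor
  · rintro ⟨e, ⟨hY, hs⟩, rfl⟩
    exact ⟨⟨_, hY, _, hs, rfl⟩, e.2⟩
  · rintro ⟨⟨x, hx, i, hi, rfl⟩, hne⟩
    exact ⟨⟨(x, i), hne⟩, ⟨hx, hi⟩, rfl⟩

/- Telescoping along `w`: each letter contributes one Schreier generator or its inverse. -/
theorem inv_mul_mul_mem_closure (T : FreeGroup ι ⧸ K → List (ι × Bool)) {s : Set ι}
    {w : FreeGroup ι} (hw : w ∈ closure (FreeGroup.of '' s)) :
    ∀ v ∈ closure (FreeGroup.of '' s),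
      (FreeGroup.mk (T v))⁻¹ * w * FreeGroup.mk (T (w⁻¹ * v : FreeGroup ι)) ∈
        closure (Set.image2 (schreierGenerator T)
          (QuotientGroup.mk '' (closure (FreeGroup.of '' s) : Set (FreeGroup ι))) s) := by
  induction hw using closure_induction with
  | mem w hw =>
    obtain ⟨i, hi, rfl⟩ := hw
    exact fun v hv => subset_closure ⟨_, ⟨v, hv, rfl⟩, i, hi, rfl⟩
  | one => exact fun v _ => by simp only [mul_one, inv_one, one_mul, inv_mul_cancel, one_mem]
  | mul w w' hw _ ihw ihw' =>
    intro v hv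
    convert mul_mem (ihw v hv) (ihw' _ (mul_mem (inv_mem hw) hv)) using 1
    group
  | inv w hw ihw =>
    intro v hv
    convert inv_mem (ihw _ (mul_mem hw hv)) using 1
    group

namespace IsSchreierTransversal

variable {T : FreeGroup ι ⧸ K → List (ι × Bool)}

theorem apply_one (hT : IsSchreierTransversal T) : T (1 : FreeGroup ι) = [] :=
  hT.eq_of_suffix (x := (1 : FreeGroup ι)) List.nil_suffix

theorem smul_one (hT : IsSchreierTransversal T) (x : FreeGroup ι ⧸ K) :
    FreeGroup.mk (T x) • ((1 : FreeGroup ι) : FreeGroup ι ⧸ K) = x := by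
  rw [MulAction.Quotient.smul_coe, smul_eq_mul, mul_one, hT.mk_eq]

theorem inv_mul_mul_mem (hT : IsSchreierTransversal T) (w : FreeGroup ι)
    (x : FreeGroup ι ⧸ K) :
    (FreeGroup.mk (T x))⁻¹ * w * FreeGroup.mk (T (w⁻¹ • x)) ∈ K := by
  rw [mul_assoc, ← QuotientGroup.eq, hT.mk_eq, ← smul_eq_mul, ← MulAction.Quotient.smul_coe,
    hT.mk_eq, smul_inv_smul]

theorem closure_inf_eq (hT : IsSchreierTransversal T) {s : Set ι}
    (hs : ∀ w ∈ closure (FreeGroup.of '' s),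
      FreeGroup.mk (T (w : FreeGroup ι)) ∈ closure (FreeGroup.of '' s)) :
    closure (FreeGroup.of '' s) ⊓ K =
      closure (Set.image2 (schreierGenerator T)
        (QuotientGroup.mk '' (closure (FreeGroup.of '' s) : Set (FreeGroup ι))) s) := by
  refine le_antisymm (fun k hk => ?_) ((closure_le _).2 ?_)
  · have inv_eq : ((k⁻¹ * 1 : FreeGroup ι) : FreeGroup ι ⧸ K) = (1 : FreeGroup ι) :=
      QuotientGroup.eq.2 (by simpa using hk.2)
    have hmem := inv_mul_mul_mem_closure T hk.1 1 (one_mem _)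
    rwa [inv_eq, hT.apply_one, ← FreeGroup.one_eq_mk, inv_one, one_mul, mul_one] at hmem
  · rintro _ ⟨_, ⟨v, hv, rfl⟩, i, hi, rfl⟩
    have hof : FreeGroup.of i ∈ closure (FreeGroup.of '' s) := subset_closure ⟨i, hi, rfl⟩
    have hend := hs _ (mul_mem (inv_mem hof) hv)
    have hmem : schreierGenerator T v i ∈ closure (FreeGroup.of '' s) :=
      mul_mem (mul_mem (inv_mem (hs v hv)) hof) hend
    exact ⟨hmem, hT.inv_mul_mul_mem _ _⟩

theorem pathProduct_mk_eq_one (hT : IsSchreierTransversal T) {S : Type*} [Group S]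
    {γ : FreeGroup ι ⧸ K → ι → S}
    (hγ : ∀ x i, schreierGenerator T x i = 1 → γ x i = 1) :
    ∀ (l : List (ι × Bool)) (x : FreeGroup ι ⧸ K), T x = l → pathProduct γ (FreeGroup.mk l) x = 1
  | [], x, _ => pathProduct_one γ x
  | p :: l, x, hx => by
    have hl : T (FreeGroup.mk l : FreeGroup ι) = l :=
      hT.eq_of_suffix (x := x) (hx ▸ l.suffix_cons p)
    have hcons : FreeGroup.mk (p :: l) = FreeGroup.mk [p] * FreeGroup.mk l := by
      rw [FreeGroup.mul_mk]; rfl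
    have hpx : (FreeGroup.mk [p])⁻¹ • x = (FreeGroup.mk l : FreeGroup ι) := by
      rw [inv_smul_eq_iff, ← hT.mk_eq x, hx, hcons]; rfl
    rw [hcons, pathProduct_mul, hpx, pathProduct_mk_eq_one hT hγ l _ hl, mul_one]
    obtain ⟨i, _ | _⟩ := p
    · rw [show FreeGroup.mk [(i, false)] = (FreeGroup.of i)⁻¹ from rfl] at hcons hpx ⊢
      rw [inv_inv] at hpx
      rw [pathProduct_inv, inv_eq_one, hpx, pathProduct_of]
      apply hγ
      rw [schreierGenerator, ← hpx, inv_smul_smul, hpx, hl, hx, hcons]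
      group
    · rw [show FreeGroup.mk [(i, true)] = FreeGroup.of i from rfl] at hcons hpx ⊢
      rw [pathProduct_of]
      apply hγ
      rw [schreierGenerator, hpx, hl, hx, hcons]
      group

theorem pathProduct_schreierGenerator (hT : IsSchreierTransversal T) {S : Type*} [Group S]
    {γ : FreeGroup ι ⧸ K → ι → S}
    (hγ : ∀ x i, schreierGenerator T x i = 1 → γ x i = 1) (x : FreeGroup ι ⧸ K) (i : ι) :
    pathProduct γ (schreierGenerator T x i) (1 : FreeGroup ι) = γ x i := by
  rw [schreierGenerator, mul_assoc, pathProduct_mul, pathProduct_inv, inv_inv, hT.smul_one,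
    hT.pathProduct_mk_eq_one hγ _ _ rfl, pathProduct_mul, hT.pathProduct_mk_eq_one hγ _ _ rfl,
    pathProduct_of]
  simp

theorem freelyGenerates (hT : IsSchreierTransversal T) : FreelyGenerates (schreierBasis T) K where
  injective := by
    classical
    let γ (x : FreeGroup ι ⧸ K) (i : ι) :
        FreeGroup {e : (FreeGroup ι ⧸ K) × ι // schreierGenerator T e.1 e.2 ≠ 1} :=
      if h : schreierGenerator T x i = 1 then 1 else FreeGroup.of ⟨(x, i), h⟩
    have hγ (x i) (h : schreierGenerator T x i = 1) : γ x i = 1 := dif_pos h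
    let retraction : K →* FreeGroup _ :=
      { toFun := fun k => pathProduct γ k (1 : FreeGroup ι)
        map_one' := pathProduct_one _ _
        map_mul' := fun k k' => by
          have smul_one : (k : FreeGroup ι)⁻¹ • ((1 : FreeGroup ι) : FreeGroup ι ⧸ K) =
              (1 : FreeGroup ι) := QuotientGroup.eq.2 (by simp)
          rw [coe_mul, pathProduct_mul, smul_one] }
    let toK := FreeGroup.lift fun e => (⟨schreierBasis T e, hT.inv_mul_mul_mem _ _⟩ : K)
    have retraction_comp : retraction.comp toK = MonoidHom.id _ := by
      ext e
      simpa [toK, retraction, schreierBasis, hT.pathProduct_schreierGenerator hγ] using dif_neg e.2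
    have lift_eq : FreeGroup.lift (schreierBasis T) = K.subtype.comp toK := by ext; simp [toK]
    rw [lift_eq]
    have toK_injective : Injective toK :=
      LeftInverse.injective (g := retraction) (DFunLike.congr_fun retraction_comp)
    exact Subtype.val_injective.comp toK_injective
  closure_eq := by
    have h := hT.closure_inf_eq (s := Set.univ) (by simp [FreeGroup.closure_range_of])
    rw [Set.image_univ, FreeGroup.closure_range_of, top_inf_eq, coe_top, Set.image_univ,
      Set.range_eq_univ.2 QuotientGroup.mk_surjective, ← closure_image_schreierBasis] at h
    simpa using h.symm

end IsSchreierTransversal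

theorem isFreeFactor_closure_image_of_inf {ι : Type u} (K : Subgroup (FreeGroup ι)) (s : Set ι) :
    IsFreeFactor (closure (FreeGroup.of '' s) ⊓ K) K := by
  obtain ⟨T, hT, hTs⟩ := exists_isSchreierTransversal K s
  rw [hT.closure_inf_eq fun w hw => mk_mem_closure_image_of (hTs w hw),
    ← closure_image_schreierBasis]
  exact hT.freelyGenerates.isFreeFactor_closure_image _

end Schreier

theorem FreelyGenerates.isFreeFactor_closure_image_inf {G : Type u} [Group G] {α : Type u}
    {f : α → G} {K L : Subgroup G} (hf : FreelyGenerates f L) (hKL : K ≤ L) (s : Set α) :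
    IsFreeFactor (closure (f '' s) ⊓ K) K := by
  have h := (isFreeFactor_closure_image_of_inf (K.comap (FreeGroup.lift f)) s).map hf.injective
  rw [map_inf _ _ _ hf.injective, map_comap_eq_self (hf.range_lift.symm ▸ hKL),
    MonoidHom.map_closure, ← Set.image_comp] at h
  simpa [comp_def] using h

section Tight

variable {G : Type u} [Group G]

theorem exists_le_of_fg_le_iSup {κ : Type*} [Nonempty κ] {U : κ → Subgroup G}
    (hU : Directed (· ≤ ·) U) {R : Subgroup G} (hR : R.FG) (hRU : R ≤ ⨆ k, U k) :
    ∃ k, R ≤ U k := by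
  obtain ⟨S, rfl⟩ := hR
  rw [closure_le, coe_iSup_of_directed hU] at hRU
  obtain ⟨k, hk⟩ := Directed.exists_mem_subset_of_finset_subset_biUnion hU hRU
  exact ⟨k, (closure_le _).2 hk⟩

theorem exists_finset_le_closure_image {α : Type*} {f : α → G} {R : Subgroup G} (hR : R.FG)
    (hRf : R ≤ closure (Set.range f)) : ∃ s : Finset α, R ≤ closure (f '' s) := by
  refine exists_le_of_fg_le_iSup (U := fun s : Finset α => closure (f '' s))
    (Monotone.directed_le fun s s' h => closure_mono (Set.image_mono h)) hR (hRf.trans ?_)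
  refine (closure_le _).2 (Set.range_subset_iff.2 fun a => ?_)
  exact le_iSup (fun s : Finset α => closure (f '' s)) {a} (subset_closure ⟨a, by simp, rfl⟩)

variable {C D K R : Subgroup G}

theorem IsFreeFactor.inf_of_le (h : IsFreeFactor D K) (hCK : C ≤ K) : IsFreeFactor (D ⊓ C) C := by
  obtain ⟨α, β, f, g, hfg, rfl⟩ := h
  simpa [← Set.range_comp] using hfg.isFreeFactor_closure_image_inf hCK (Set.range Sum.inl)

variable (Φ : G →* G)

/-- The subgroup generated by `P` and its image under `Φ`. -/
def step (P : Subgroup G) : Subgroup G := P ⊔ P.map Φ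

/-- `P` is obtained from `R` by repeatedly replacing a subgroup `Q` by a subgroup between `Q` and
`step Φ Q`. Such a replacement does not change the subgroup of the mapping torus generated by
`Q` and the stable letter. -/
def Reachable : Subgroup G → Subgroup G → Prop :=
  Relation.ReflTransGen fun Q Q' => Q ≤ Q' ∧ Q' ≤ step Φ Q

variable {Φ}

theorem fg_step {P : Subgroup G} (hP : P.FG) : (step Φ P).FG := by
  obtain ⟨S, rfl⟩ := hP
  exact .sup ⟨S, rfl⟩ ⟨_, by rw [MonoidHom.map_closure, (S.finite_toSet.image Φ).coe_toFinset]⟩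

variable [IsFreeGroup G]

theorem exists_minimal_isFreeFactor (hK : K.FG) (hRK : R ≤ K) :
    ∃ D, Minimal (fun D => R ≤ D ∧ IsFreeFactor D K) D := by
  obtain ⟨D, hmin⟩ := exists_minimalFor_of_wellFoundedLT
    (fun D : Subgroup G => R ≤ D ∧ IsFreeFactor D K) (fun D => freeRank D) ⟨K, hRK, .refl K⟩
  have hD := hmin.prop
  refine ⟨D, hD, fun D' hD' hle => ?_⟩
  have hff : IsFreeFactor D' D := inf_eq_left.2 hle ▸ hD'.2.inf_of_le hD.2.le
  refine (hff.eq_of_freeRank_le (hD.2.fg hK) ?_).ge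
  exact hmin.le hD'

/- All `u i` lie in every free factor of `⨆ i, u i` that contains `u 0`, and one such factor is
finitely generated. -/
theorem exists_succ_eq_of_minimal_isFreeFactor {u v : ℕ → Subgroup G} (h0 : (u 0).FG)
    (hu : ∀ i, Minimal (fun D => u i ≤ D ∧ IsFreeFactor D (v i)) (u (i + 1))) :
    ∃ n, u (n + 1) = u n := by
  obtain ⟨f, hf⟩ := exists_freelyGenerates (⨆ i, u i)
  obtain ⟨s, hs⟩ := exists_finset_le_closure_image h0 (hf.closure_eq ▸ le_iSup u 0)
  have u_le (i : ℕ) : u i ≤ closure (f '' s) := by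
    induction i with
    | zero => exact hs
    | succ i ih =>
      have hff := (hf.isFreeFactor_closure_image_inf (le_iSup u (i + 1)) s).trans (hu i).prop.2
      exact ((hu i).le_of_le ⟨le_inf ih (hu i).prop.1, hff⟩ inf_le_right).trans inf_le_left
  have u_mono : Monotone u := monotone_nat_of_le_succ fun i => (hu i).prop.1
  have hfg : (closure (f '' s)).FG :=
    ⟨_, congrArg Subgroup.closure (s.finite_toSet.image f).coe_toFinset⟩
  obtain ⟨n, hn⟩ := exists_le_of_fg_le_iSup u_mono.directed_le hfg
    ((Subgroup.closure_mono (Set.image_subset_range f s)).trans hf.closure_eq.le)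
  exact ⟨n, le_antisymm ((u_le _).trans hn) (u_mono n.le_succ)⟩

theorem exists_reachable_isFreeFactor_step {R : Subgroup G} (hR : R.FG) :
    ∃ P, P.FG ∧ Reachable Φ R P ∧ IsFreeFactor P (step Φ P) := by
  choose next hnext using fun P : {P : Subgroup G // P.FG} =>
    exists_minimal_isFreeFactor (fg_step (Φ := Φ) P.2) le_sup_left
  let chain : ℕ → {P : Subgroup G // P.FG} :=
    Nat.rec ⟨R, hR⟩ fun _ P => ⟨next P, (hnext P).prop.2.fg (fg_step P.2)⟩
  have reachable (i : ℕ) : Reachable Φ R (chain i).1 := by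
    induction i with
    | zero => exact .refl
    | succ i ih => exact ih.tail ⟨(hnext (chain i)).prop.1, (hnext (chain i)).prop.2.le⟩
  obtain ⟨n, hn⟩ := exists_succ_eq_of_minimal_isFreeFactor (u := fun i => (chain i).1) hR
    fun i => hnext (chain i)
  refine ⟨(chain n).1, (chain n).2, reachable n, ?_⟩
  have := (hnext (chain n)).prop.2
  exact hn ▸ this

end Tight

section Scaling

variable {G : Type u} [Group G] {Φ : G →* G} {P Q : Subgroup G}

theorem map_mem_step {y : G} (hy : y ∈ P) : Φ y ∈ step Φ P :=
  mem_sup_right (mem_map_of_mem Φ hy)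

theorem step_closure_range {α : Type*} (a : α → G) :
    step Φ (closure (Set.range a)) = closure (Set.range a ∪ Set.range fun j => Φ (a j)) := by
  rw [Subgroup.closure_union, step, MonoidHom.map_closure, ← Set.range_comp]
  rfl

theorem step_mono : Monotone (step Φ) := fun _ _ h => sup_le_sup h (map_mono h)

theorem Reachable.le (h : Reachable Φ Q P) : Q ≤ P := by
  induction h with
  | refl => exact le_rfl
  | tail _ hstep ih => exact ih.trans hstep.1

theorem Reachable.induction_le {V : Subgroup G} (h : Reachable Φ Q P) (hQ : Q ≤ V)
    (hV : ∀ R ≤ P, R ≤ V → step Φ R ≤ V) : P ≤ V := by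
  induction h with
  | refl => exact hQ
  | tail _ hstep ih =>
    exact hstep.2.trans (hV _ hstep.1 (ih fun R hR => hV R (hR.trans hstep.1)))

theorem fg_iterate_step (hP : P.FG) (n : ℕ) : ((step Φ)^[n] P).FG := by
  induction n with
  | zero => exact hP
  | succ n ih => exact iterate_succ_apply' (step Φ) n P ▸ fg_step ih

theorem reachable_iterate_step (P : Subgroup G) (n : ℕ) : Reachable Φ P ((step Φ)^[n] P) := by
  induction n with
  | zero => exact .refl
  | succ n ih =>
    rw [iterate_succ_apply']
    exact ih.tail ⟨le_sup_left, le_rfl⟩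

variable {L E : Type*} [Field L] [AddCommGroup E] [Module L E] {x : L}

/-- `θ` is a quotient of the abelianization of `step Φ P` with coefficients in `L` on which `Φ`
acts, as far as it is defined, as multiplication by `x`. -/
structure IsScaling (x : L) (θ : step Φ P →* Multiplicative E) : Prop where
  map_eq_smul : ∀ {y z : step Φ P}, (y : G) ∈ P → (z : G) = Φ y → (θ z).toAdd = x • (θ y).toAdd
  span_eq_top : Submodule.span L (Set.range fun y => (θ y).toAdd) = ⊤

theorem exists_monoidHom_pi_span_eq_top {K : Subgroup G} [IsFreeGroup K] (hK : K.FG) (L : Type*)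
    [Field L] : ∃ φ : K →* Multiplicative (Fin (freeRank K) → L),
      Submodule.span L (Set.range fun y => (φ y).toAdd) = ⊤ := by
  obtain ⟨f, hf⟩ := exists_fin_freelyGenerates hK
  let ab : FreeGroup (Fin (freeRank K)) →* Multiplicative (Fin (freeRank K) → L) :=
    FreeGroup.lift fun i => .ofAdd (Pi.basisFun L _ i)
  refine ⟨ab.comp hf.mulEquiv.symm.toMonoidHom, eq_top_iff.2 ?_⟩
  rw [← (Pi.basisFun L (Fin (freeRank K))).span_eq]
  refine Submodule.span_mono (Set.range_subset_iff.2 fun i => ⟨⟨f i, hf.mem i⟩, ?_⟩)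
  simp [ab, hf.mulEquiv_symm_apply]

theorem span_range_mkQ_eq_top {ι : Type*} {v : ι → E} (hv : Submodule.span L (Set.range v) = ⊤)
    (N : Submodule L E) : Submodule.span L (Set.range fun i => N.mkQ (v i)) = ⊤ := by
  rw [Set.range_comp' N.mkQ, Submodule.span_image, hv, Submodule.map_top, N.range_mkQ]

theorem exists_isScaling [IsFreeGroup G] {L : Type v} [Field L] (x : L) (hP : P.FG) :
    ∃ (E : Type v) (_ : AddCommGroup E) (_ : Module L E) (θ : step Φ P →* Multiplicative E),
      IsScaling x θ ∧ freeRank (step Φ P) ≤ freeRank P + finrank L E := by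
  obtain ⟨a, ha⟩ := exists_fin_freelyGenerates hP
  obtain ⟨φ, hφ⟩ := exists_monoidHom_pi_span_eq_top (fg_step (Φ := Φ) hP) L
  let relator (j : Fin (freeRank P)) : Fin (freeRank (step Φ P)) → L :=
    (φ ⟨Φ (a j), map_mem_step (ha.mem j)⟩).toAdd - x • (φ ⟨a j, mem_sup_left (ha.mem j)⟩).toAdd
  let N : Submodule L (Fin (freeRank (step Φ P)) → L) := Submodule.span L (Set.range relator)
  let θ : step Φ P →* Multiplicative (_ ⧸ N) := (AddMonoidHom.toMultiplicative N.mkQ).comp φ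
  refine ⟨_ ⧸ N, inferInstance, inferInstance, θ, ⟨?_, span_range_mkQ_eq_top hφ N⟩, ?_⟩
  · let map_Φ : P →* step Φ P := (Φ.comp P.subtype).codRestrict _ fun y => map_mem_step y.2
    let smul_x : (_ ⧸ N) →+ (_ ⧸ N) := DistribSMul.toAddMonoidHom _ x
    have comp_map_Φ : θ.comp map_Φ =
        (AddMonoidHom.toMultiplicative smul_x).comp (θ.comp (inclusion le_sup_left)) :=
      ha.hom_ext fun j => (Submodule.Quotient.eq N).2 (Submodule.subset_span ⟨j, rfl⟩)
    rintro y ⟨z, hz⟩ hy rfl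
    exact DFunLike.congr_fun comp_map_Φ ⟨y, hy⟩
  · have finrank_N_le : finrank L N ≤ freeRank P := by
      simpa [Set.finrank] using finrank_range_le_card (R := L) relator
    have finrank_add : finrank L (_ ⧸ N) + finrank L N = freeRank (step Φ P) := by
      rw [N.finrank_quotient_add_finrank, finrank_fin_fun]
    lia

namespace IsScaling

variable {θ : step Φ P →* Multiplicative E}

theorem quotient (hθ : IsScaling x θ) (N : Submodule L E) :
    IsScaling x ((AddMonoidHom.toMultiplicative (N.mkQ : E →+ E ⧸ N)).comp θ) where
  map_eq_smul hy hz := (congrArg N.mkQ (hθ.map_eq_smul hy hz)).trans (map_smul _ _ _)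
  span_eq_top := span_range_mkQ_eq_top hθ.span_eq_top N

theorem map_iterate_eq_pow_smul (hθ : IsScaling x θ) {b : G} {n : ℕ}
    (hb : ∀ i < n, Φ^[i] b ∈ P) {y z : step Φ P} (hy : (y : G) = b) (hz : (z : G) = Φ^[n] b) :
    (θ z).toAdd = x ^ n • (θ y).toAdd := by
  induction n generalizing z with
  | zero => rw [pow_zero, one_smul, Subtype.ext (hz.trans hy.symm)]
  | succ n ih =>
    have hn : Φ^[n] b ∈ P := hb n n.lt_succ_self
    rw [hθ.map_eq_smul (y := ⟨Φ^[n] b, mem_sup_left hn⟩) hn (hz.trans (iterate_succ_apply' ..)),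
      ih (fun i hi => hb i (hi.trans n.lt_succ_self)) rfl, smul_smul, pow_succ']

theorem step_le_map_ker (hθ : IsScaling x θ) (hQP : Q ≤ P)
    (hQ : Q ≤ θ.ker.map (step Φ P).subtype) : step Φ Q ≤ θ.ker.map (step Φ P).subtype := by
  refine sup_le hQ ?_
  rintro _ ⟨y, hy, rfl⟩
  obtain ⟨y, hy_ker, rfl⟩ := hQ hy
  refine ⟨⟨Φ y, map_mem_step (hQP hy)⟩, ?_, rfl⟩
  have h := hθ.map_eq_smul (z := ⟨Φ y, map_mem_step (hQP hy)⟩) (hQP hy) rfl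
  rw [MonoidHom.mem_ker.1 hy_ker, toAdd_one, smul_zero] at h
  exact h

/- The `ℤ`-span of `θ Q` is finitely generated and stable under `x`. -/
theorem le_map_ker (hθ : IsScaling x θ) (hx : Transcendental ℤ x) (hQP : Q ≤ P) (hQ : Q.FG)
    (hstep : step Φ Q ≤ Q ⊔ θ.ker.map (step Φ P).subtype) :
    Q ≤ θ.ker.map (step Φ P).subtype := by
  obtain ⟨S, rfl⟩ := hQ
  have mem_P (y : S) : (y : G) ∈ P := hQP (subset_closure y.2)
  let N : Submodule ℤ E :=
    Submodule.span ℤ (Set.range fun y : S => (θ ⟨y, mem_sup_left (mem_P y)⟩).toAdd)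
  have le_map_comap : Subgroup.closure (S : Set G) ⊔ θ.ker.map (step Φ P).subtype ≤
      ((AddSubgroup.toSubgroup N.toAddSubgroup).comap θ).map (step Φ P).subtype := by
    refine sup_le ((closure_le _).2 fun y hy => ?_) (map_mono (θ.ker_le_comap _))
    exact ⟨⟨y, mem_sup_left (mem_P ⟨y, hy⟩)⟩, Submodule.subset_span ⟨⟨y, hy⟩, rfl⟩, rfl⟩
  have smul_mem (e : E) (he : e ∈ N) : x • e ∈ N := by
    have N_le : N ≤ N.comap (DistribSMul.toLinearMap ℤ E x) := by
      refine Submodule.span_le.2 (Set.range_subset_iff.2 fun y => ?_)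
      obtain ⟨z, hz, hzy⟩ := le_map_comap (hstep (map_mem_step (subset_closure y.2)))
      have map_eq := hθ.map_eq_smul (y := ⟨y, mem_sup_left (mem_P y)⟩) (mem_P y) hzy
      exact Submodule.mem_comap.2 (Set.mem_of_eq_of_mem map_eq.symm hz)
    exact N_le he
  have N_eq_bot : N = ⊥ := by
    by_contra hN
    have hfin : N.FG := Submodule.fg_span (Set.finite_range _)
    exact hx (isIntegral_of_smul_mem_submodule N hN hfin x smul_mem).isAlgebraic
  refine (closure_le _).2 fun y hy => ⟨⟨y, mem_sup_left (mem_P ⟨y, hy⟩)⟩, ?_, rfl⟩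
  exact Submodule.span_eq_bot.1 N_eq_bot _ ⟨⟨y, hy⟩, rfl⟩

theorem subsingleton_of_reachable (hθ : IsScaling x θ) (hx : Transcendental ℤ x)
    (hQP : Reachable Φ Q P) (hQ : Q.FG)
    (hstep : step Φ Q ≤ Q ⊔ θ.ker.map (step Φ P).subtype) : Subsingleton E := by
  have hP : P ≤ θ.ker.map (step Φ P).subtype :=
    hQP.induction_le (hθ.le_map_ker hx hQP.le hQ hstep) fun R => hθ.step_le_map_ker
  have map_eq_zero (y : step Φ P) : (θ y).toAdd = 0 := by
    obtain ⟨z, hz, hzy⟩ := hθ.step_le_map_ker le_rfl hP y.2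
    exact Subtype.ext hzy ▸ hz
  rw [← Submodule.subsingleton_iff L, ← subsingleton_iff_bot_eq_top, ← hθ.span_eq_top, eq_comm]
  simp [map_eq_zero]

theorem span_eq_top_of_reachable (hθ : IsScaling x θ) (hx : Transcendental ℤ x)
    (hQP : Reachable Φ Q P) (hQ : Q.FG) {β : Type*} {b : β → step Φ P}
    (hb : Q ⊔ closure (Set.range fun k => (b k : G)) = step Φ Q) :
    Submodule.span L (Set.range fun k => (θ (b k)).toAdd) = ⊤ := by
  rw [← Submodule.Quotient.subsingleton_iff]
  refine (hθ.quotient _).subsingleton_of_reachable hx hQP hQ ?_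
  rw [← hb]
  refine sup_le_sup_left ((closure_le _).2 ?_) Q
  rintro _ ⟨k, rfl⟩
  refine ⟨b k, ?_, rfl⟩
  exact (Submodule.Quotient.mk_eq_zero _).2 (Submodule.subset_span ⟨k, rfl⟩)

end IsScaling

end Scaling

section Growth

variable {G : Type u} [Group G] {Φ : G →* G} {P Q : Subgroup G}

theorem iterate_step_succ {β : Type*} {b : β → G}
    (hb : P ⊔ closure (Set.range b) = step Φ P) (n : ℕ) :
    (step Φ)^[n + 1] P = (step Φ)^[n] P ⊔ closure (Set.range fun k => Φ^[n] (b k)) := by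
  induction n with
  | zero => exact hb.symm
  | succ n ih =>
    have map_step_le : ((step Φ)^[n] P).map Φ ≤ (step Φ)^[n + 1] P := by
      rw [iterate_succ_apply' (step Φ)]
      exact le_sup_right
    calc (step Φ)^[n + 2] P
        = (step Φ)^[n + 1] P ⊔ ((step Φ)^[n + 1] P).map Φ := iterate_succ_apply' ..
      _ = (step Φ)^[n + 1] P ⊔ (((step Φ)^[n] P).map Φ ⊔
            (closure (Set.range fun k => Φ^[n] (b k))).map Φ) := by rw [← Subgroup.map_sup, ← ih]
      _ = (step Φ)^[n + 1] P ⊔ (closure (Set.range fun k => Φ^[n] (b k))).map Φ := by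
          rw [← sup_assoc, sup_eq_left.2 map_step_le]
      _ = (step Φ)^[n + 1] P ⊔ closure (Set.range fun k => Φ^[n + 1] (b k)) := by
          simp only [MonoidHom.map_closure, ← Set.range_comp, comp_def, iterate_succ_apply']

theorem iterate_mem_iterate_step {β : Type*} {b : β → G}
    (hb : P ⊔ closure (Set.range b) = step Φ P) {i n : ℕ} (hin : i < n) (k : β) :
    Φ^[i] (b k) ∈ (step Φ)^[n] P := by
  have id_le_step : id ≤ step Φ := fun _ => le_sup_left
  refine monotone_iterate_of_id_le id_le_step (Nat.succ_le_of_lt hin) P ?_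
  exact (iterate_step_succ hb i).ge (mem_sup_right (subset_closure ⟨k, rfl⟩))

variable [IsFreeGroup G] {r : ℕ} {b : Fin r → G}

theorem natCard_le_freeRank_of_linearIndependent {A E ι : Type*} [CommRing A] [Nontrivial A]
    [AddCommGroup E] [Module A E] (hP : P.FG) (φ : P →* Multiplicative E) {y : ι → P}
    (hy : LinearIndependent A fun i => (φ (y i)).toAdd) : Nat.card ι ≤ freeRank P := by
  obtain ⟨f, hf⟩ := exists_fin_freelyGenerates hP
  refine (natCard_le_of_linearIndependent_map (R := A) (φ.comp hf.mulEquiv.toMonoidHom)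
    (FreeGroup.closure_range_of _) (x := hf.mulEquiv.symm ∘ y) ?_).2.trans_eq (Nat.card_fin _)
  simpa using hy

theorem exists_field_transcendental_int :
    ∃ (L : Type) (_ : Field L) (x : L), Transcendental ℤ x :=
  ⟨ℝ, inferInstance, _, transcendental_liouvilleNumber le_rfl⟩

theorem linearIndependent_pow_of_transcendental {A B : Type*} [CommRing A] [CommRing B]
    [Algebra A B] {x : B} (hx : Transcendental A x) : LinearIndependent A fun n : ℕ => x ^ n := by
  have h := (Polynomial.basisMonomials A).linearIndependent.map' (Polynomial.aeval x).toLinearMap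
    (LinearMap.ker_eq_bot.2 (transcendental_iff_injective.1 hx))
  simpa [comp_def] using h

theorem freeRank_step_le_of_reachable (hP : P.FG) (hb : P ⊔ closure (Set.range b) = step Φ P)
    (hPQ : Reachable Φ P Q) (hQ : Q.FG) : freeRank (step Φ Q) ≤ freeRank Q + r := by
  obtain ⟨L, _, x, hx⟩ := exists_field_transcendental_int
  obtain ⟨E, _, _, θ, hθ, hrank⟩ := exists_isScaling (Φ := Φ) x hQ
  have mem_step (k : Fin r) : b k ∈ step Φ Q :=
    step_mono hPQ.le (hb ▸ mem_sup_right (subset_closure ⟨k, rfl⟩))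
  have hspan := hθ.span_eq_top_of_reachable hx hPQ hP (b := fun k => ⟨b k, mem_step k⟩) hb
  have finrank_le := finrank_range_le_card (R := L) (fun k => (θ ⟨b k, mem_step k⟩).toAdd)
  rw [Set.finrank, hspan, finrank_top, Fintype.card_fin] at finrank_le
  lia

/- When equality holds in `freeRank_step_le_of_reachable`, the images of the `b k` are a basis, and
`Φ^[i] (b k)` maps to the `x ^ i`-multiple of a basis vector. -/
theorem mul_le_freeRank_iterate_step (hP : P.FG) (hb : P ⊔ closure (Set.range b) = step Φ P)
    (hPQ : Reachable Φ P Q) (hQ : Q.FG) (hQ_rank : freeRank Q + r ≤ freeRank (step Φ Q)) {n : ℕ}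
    (hn : (step Φ)^[n] P ≤ Q) : n * r ≤ freeRank ((step Φ)^[n] P) := by
  obtain ⟨L, _, x, hx⟩ := exists_field_transcendental_int
  obtain ⟨E, _, _, θ, hθ, hrank⟩ := exists_isScaling (Φ := Φ) x hQ
  have mem_step (k : Fin r) : b k ∈ step Φ Q :=
    step_mono hPQ.le (hb ▸ mem_sup_right (subset_closure ⟨k, rfl⟩))
  have hspan := hθ.span_eq_top_of_reachable hx hPQ hP (b := fun k => ⟨b k, mem_step k⟩) hb
  have hlin : LinearIndependent L fun k => (θ ⟨b k, mem_step k⟩).toAdd := by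
    rw [linearIndependent_iff_card_le_finrank_span, Set.finrank, hspan, finrank_top,
      Fintype.card_fin]
    lia
  have hpow : LinearIndependent ℤ fun i : Fin n => x ^ (i : ℕ) :=
    (linearIndependent_pow_of_transcendental hx).comp _ Fin.val_injective
  have hlin_int := linearIndependent_smul hpow hlin
  let φ := θ.comp (inclusion (hn.trans le_sup_left))
  let y (p : Fin n × Fin r) : (step Φ)^[n] P :=
    ⟨Φ^[p.1] (b p.2), iterate_mem_iterate_step hb p.1.2 p.2⟩
  have map_y (p : Fin n × Fin r) :
      (φ (y p)).toAdd = x ^ (p.1 : ℕ) • (θ ⟨b p.2, mem_step p.2⟩).toAdd :=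
    hθ.map_iterate_eq_pow_smul
      (fun i hi => hn (iterate_mem_iterate_step hb (hi.trans p.1.2) p.2)) rfl rfl
  simpa using natCard_le_freeRank_of_linearIndependent (fg_iterate_step hP n) φ (y := y)
    (by simpa only [map_y] using hlin_int)

end Growth

section FreeOrbits

variable {G : Type u} [Group G] {Φ : G →* G} {P R : Subgroup G} {r : ℕ} {b : Fin r → G}

theorem injective_lift_of_forall_finset {α : Type*} {f : α → G}
    (h : ∀ s : Finset α, ∃ (γ : Type v) (c : γ → α),
      ↑s ⊆ Set.range c ∧ Injective (FreeGroup.lift (f ∘ c))) :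
    Injective (FreeGroup.lift f) := by
  rw [injective_iff_map_eq_one]
  intro w hw
  obtain ⟨s, hs⟩ := exists_finset_le_closure_image (f := FreeGroup.of) (R := zpowers w)
    ⟨{w}, by simp [zpowers_eq_closure]⟩ (by simp)
  obtain ⟨γ, c, hsc, hinj⟩ := h s
  have closure_le_range : closure (FreeGroup.of '' s) ≤ (FreeGroup.map c).range := by
    refine (closure_le _).2 (Set.image_subset_iff.2 fun i hi => ?_)
    obtain ⟨j, rfl⟩ := hsc hi
    exact ⟨FreeGroup.of j, FreeGroup.map.of⟩
  obtain ⟨w', rfl⟩ := closure_le_range (hs (mem_zpowers w))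
  have lift_comp : (FreeGroup.lift f).comp (FreeGroup.map c) = FreeGroup.lift (f ∘ c) := by
    ext; simp
  have hw' : w' = 1 := (injective_iff_map_eq_one _).1 hinj w' (lift_comp ▸ hw)
  rw [hw', map_one]

theorem iterate_step_eq_sup (hb : P ⊔ closure (Set.range b) = step Φ P) (n : ℕ) :
    (step Φ)^[n] P = P ⊔ closure (Set.range fun p : Fin r × Fin n => Φ^[p.2] (b p.1)) := by
  refine le_antisymm ?_ (sup_le (reachable_iterate_step P n).le ((closure_le _).2 ?_))
  · induction n with
    | zero => exact le_sup_left
    | succ n ih =>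
      rw [iterate_step_succ hb]
      refine sup_le (ih.trans (sup_le_sup_left (Subgroup.closure_mono ?_) _))
        (le_sup_of_le_right (Subgroup.closure_mono ?_))
      · exact Set.range_subset_iff.2 fun p => ⟨(p.1, p.2.castSucc), rfl⟩
      · exact Set.range_subset_iff.2 fun k => ⟨(k, Fin.last n), rfl⟩
  · exact Set.range_subset_iff.2 fun p => iterate_mem_iterate_step hb p.2.2 p.1

variable [IsFreeGroup G]

theorem FreelyGenerates.injective_lift_sumElim_iterate {m : ℕ} {a : Fin m → G}
    (ha : FreelyGenerates a P) (hb : P ⊔ closure (Set.range b) = step Φ P)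
    (hrank : ∀ n, freeRank P + n * r ≤ freeRank ((step Φ)^[n] P)) :
    Injective (FreeGroup.lift (Sum.elim a fun p : Fin r × ℕ => Φ^[p.2] (b p.1))) := by
  refine injective_lift_of_forall_finset fun s => ?_
  obtain ⟨n, hn⟩ := (s.image (Sum.elim (fun _ => 0) Prod.snd)).exists_nat_subset_range
  refine ⟨_, Sum.map id (Prod.map id Fin.val : Fin r × Fin n → _), ?_, ?_⟩
  · intro i hi
    have height_lt := Finset.mem_range.1 (hn (Finset.mem_image_of_mem _ hi))
    rcases i with j | ⟨k, i⟩
    · exact ⟨.inl j, rfl⟩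
    · exact ⟨.inr (k, ⟨i, height_lt⟩), rfl⟩
  · obtain ⟨f, hf⟩ := exists_fin_freelyGenerates (fg_iterate_step (Φ := Φ) ha.fg n)
    rw [Sum.elim_comp_map]
    refine (hf.of_natCard_le ?_ ?_).injective
    · rw [closure_range_sumElim, iterate_step_eq_sup hb, comp_id, ha.closure_eq]
      rfl
    · have := hrank n
      rw [ha.freeRank_eq] at this
      simpa [mul_comm r] using this

/- Minimising the number `r` of new generators over all `P` reachable from `R` makes
`freeRank_step_le_of_reachable` sharp for every such `P`. -/
theorem exists_reachable_mul_le_freeRank (Φ : G →* G) (hR : R.FG) :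
    ∃ (P : Subgroup G) (r : ℕ) (b : Fin r → G), P.FG ∧ Reachable Φ R P ∧
      P ⊔ closure (Set.range b) = step Φ P ∧ ∀ n, n * r ≤ freeRank ((step Φ)^[n] P) := by
  obtain ⟨P, hmin⟩ := exists_minimalFor_of_wellFoundedLT
    (fun P => P.FG ∧ Reachable Φ R P ∧ IsFreeFactor P (step Φ P))
    (fun P => freeRank (step Φ P) - freeRank P) (exists_reachable_isFreeFactor_step hR)
  obtain ⟨hP, hRP, hff⟩ := hmin.prop
  obtain ⟨r, b, hr, hb⟩ := hff.exists_fin_complement (fg_step hP)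
  refine ⟨P, r, b, hP, hRP, hb, fun n => ?_⟩
  obtain ⟨Q, hQ, hnQ, hQff⟩ := exists_reachable_isFreeFactor_step (Φ := Φ) (fg_iterate_step hP n)
  have hPQ : Reachable Φ P Q := (reachable_iterate_step P n).trans hnQ
  obtain ⟨r', -, hr', -⟩ := hQff.exists_fin_complement (fg_step hQ)
  have hle := hmin.le ⟨hQ, hRP.trans hPQ, hQff⟩
  exact mul_le_freeRank_iterate_step hP hb hPQ hQ (by lia) hnQ.le

theorem exists_reachable_freeRank_add_mul_le (Φ : G →* G) (hR : R.FG) :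
    ∃ (P : Subgroup G) (r : ℕ) (b : Fin r → G), P.FG ∧ Reachable Φ R P ∧
      P ⊔ closure (Set.range b) = step Φ P ∧
        ∀ n, freeRank P + n * r ≤ freeRank ((step Φ)^[n] P) := by
  obtain ⟨P, r, b, hP, hRP, hb, hrank⟩ := exists_reachable_mul_le_freeRank Φ hR
  obtain ⟨N, hN⟩ := exists_minimalFor_of_wellFoundedLT
    (fun _ : ℕ => True) (fun n => freeRank ((step Φ)^[n] P) - n * r) ⟨0, trivial⟩
  refine ⟨(step Φ)^[N] P, r, fun k => Φ^[N] (b k), fg_iterate_step hP N,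
    hRP.trans (reachable_iterate_step P N), ?_, fun n => ?_⟩
  · rw [← iterate_step_succ hb, iterate_succ_apply']
  · have excess_le := hN.le (j := n + N) trivial
    have := hrank N
    have := hrank (n + N)
    rw [← iterate_add_apply]
    lia

theorem exists_reachable_injective_lift (Φ : G →* G) (hR : R.FG) :
    ∃ (m r : ℕ) (a : Fin m → G) (b : Fin r → G), Reachable Φ R (closure (Set.range a)) ∧
      closure (Set.range a) ⊔ closure (Set.range b) = step Φ (closure (Set.range a)) ∧
      Injective (FreeGroup.lift (Sum.elim a fun p : Fin r × ℕ => Φ^[p.2] (b p.1))) := by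
  obtain ⟨P, r, b, hP, hRP, hb, hrank⟩ := exists_reachable_freeRank_add_mul_le Φ hR
  obtain ⟨a, ha⟩ := exists_fin_freelyGenerates hP
  refine ⟨_, r, a, b, ?_, ?_, ha.injective_lift_sumElim_iterate hb hrank⟩ <;> rwa [ha.closure_eq]

end FreeOrbits

section StableLetter

variable {G E : Type*} [Group G] [Group E] {s : G} {η : E →* G} {Φ : E →* E}

theorem semiconjBy_pow_iterate (h : ∀ z, SemiconjBy s (η z) (η (Φ z))) (n : ℕ) (z : E) :
    SemiconjBy (s ^ n) (η z) (η (Φ^[n] z)) := by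
  induction n with
  | zero => simp
  | succ n ih =>
    rw [pow_succ', iterate_succ_apply']
    exact (h _).mul_left ih

theorem inv_pow_mul_mul_pow_eq_add (h : ∀ z, SemiconjBy s (η z) (η (Φ z))) (d i j : ℕ) (z : E) :
    (s ^ i)⁻¹ * η z * s ^ j = (s ^ (d + i))⁻¹ * η (Φ^[d] z) * s ^ (d + j) := by
  have conj_eq : (s ^ d)⁻¹ * (η (Φ^[d] z) * s ^ d) = η z := by
    rw [← (semiconjBy_pow_iterate h d z).eq, inv_mul_cancel_left]
  simp only [pow_add, mul_inv_rev, ← conj_eq, mul_assoc]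

theorem exists_eq_inv_pow_mul_mul_pow (h : ∀ z, SemiconjBy s (η z) (η (Φ z)))
    (hgen : zpowers s ⊔ η.range = ⊤) (g : G) : ∃ i j z, g = (s ^ i)⁻¹ * η z * s ^ j := by
  have hg : g ∈ closure ({s} ∪ (η.range : Set G)) := by
    rw [Subgroup.closure_union, ← zpowers_eq_closure, closure_eq, hgen]
    trivial
  induction hg using closure_induction with
  | mem g hg =>
    rcases hg with rfl | ⟨z, rfl⟩
    · exact ⟨0, 1, 1, by simp⟩
    · exact ⟨0, 0, z, by simp⟩
  | one => exact ⟨0, 0, 1, by simp⟩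
  | inv g _ ih =>
    obtain ⟨i, j, z, rfl⟩ := ih
    exact ⟨j, i, z⁻¹, by simp [mul_assoc]⟩
  | mul g g' _ _ ih ih' =>
    obtain ⟨i, j, z, rfl⟩ := ih
    obtain ⟨i', j', z', rfl⟩ := ih'
    refine ⟨i' + i, j + j', Φ^[i'] z * Φ^[j] z', ?_⟩
    rw [inv_pow_mul_mul_pow_eq_add h i' i j, inv_pow_mul_mul_pow_eq_add h j i' j', add_comm i' j,
      map_mul]
    simp only [mul_assoc, mul_inv_cancel_left]

theorem injective_of_injective_comp {M : Type*} [Group M] {f : G →* M}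
    (h : ∀ z, SemiconjBy s (η z) (η (Φ z))) (hgen : zpowers s ⊔ η.range = ⊤)
    {deg : M →* Multiplicative ℤ} (hdeg : deg (f s) = .ofAdd 1)
    (hdeg_comp : ∀ z, deg (f (η z)) = 1) (hinj : Injective (f.comp η)) : Injective f := by
  rw [injective_iff_map_eq_one]
  intro g hg
  obtain ⟨i, j, z, rfl⟩ := exists_eq_inv_pow_mul_mul_pow h hgen g
  obtain rfl : i = j := by
    have hdeg_eq := congrArg deg hg
    simp only [map_mul, map_inv, map_pow, hdeg, hdeg_comp, map_one, mul_one, inv_mul_eq_one]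
      at hdeg_eq
    simpa using congrArg Multiplicative.toAdd hdeg_eq
  have map_z : f.comp η z = 1 := by
    rw [map_mul, map_mul, map_inv, mul_assoc, inv_mul_eq_one] at hg
    exact right_eq_mul.1 hg
  rw [(injective_iff_map_eq_one _).1 hinj z map_z, map_one]
  group

theorem exists_fg_zpowers_sup_map_eq (h : ∀ z, SemiconjBy s (η z) (η (Φ z)))
    (hgen : zpowers s ⊔ η.range = ⊤) {H : Subgroup G} (hH : H.FG) (hs : s ∈ H) :
    ∃ R : Subgroup E, R.FG ∧ zpowers s ⊔ R.map η = H := by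
  obtain ⟨S, rfl⟩ := hH
  choose i j z hz using exists_eq_inv_pow_mul_mul_pow h hgen
  refine ⟨closure (z '' S), ⟨_, congrArg _ (S.finite_toSet.image z).coe_toFinset⟩,
    le_antisymm ?_ ?_⟩
  · rw [MonoidHom.map_closure, sup_le_iff, zpowers_le, closure_le]
    refine ⟨hs, ?_⟩
    rintro _ ⟨_, ⟨g, hg, rfl⟩, rfl⟩
    have eq_mul : η (z g) = s ^ i g * g * (s ^ j g)⁻¹ := by
      nth_rw 3 [hz g]
      group
    rw [eq_mul]
    exact mul_mem (mul_mem (pow_mem hs _) (subset_closure hg)) (inv_mem (pow_mem hs _))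
  · refine (closure_le _).2 fun g hg => ?_
    have hs' : s ∈ zpowers s ⊔ (closure (z '' S)).map η := mem_sup_left (mem_zpowers s)
    have hz' : η (z g) ∈ zpowers s ⊔ (closure (z '' S)).map η :=
      mem_sup_right (mem_map_of_mem η (subset_closure ⟨g, hg, rfl⟩))
    rw [hz g]
    exact mul_mem (mul_mem (inv_mem (pow_mem hs' _)) hz') (pow_mem hs' _)

variable {P R : Subgroup E}

theorem zpowers_sup_map_step (h : ∀ z, SemiconjBy s (η z) (η (Φ z))) (P : Subgroup E) :
    zpowers s ⊔ (step Φ P).map η = zpowers s ⊔ P.map η := by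
  refine le_antisymm (sup_le le_sup_left ?_) (sup_le_sup_left (map_mono le_sup_left) _)
  rw [step, Subgroup.map_sup, sup_le_iff]
  refine ⟨le_sup_right, ?_⟩
  rintro _ ⟨_, ⟨z, hz, rfl⟩, rfl⟩
  have hs : s ∈ zpowers s ⊔ P.map η := mem_sup_left (mem_zpowers s)
  rw [← mul_inv_eq_iff_eq_mul.2 (h z).eq]
  exact mul_mem (mul_mem hs (mem_sup_right (mem_map_of_mem η hz))) (inv_mem hs)

theorem zpowers_sup_map_closure_range {α : Type*} (s : G) (η : E →* G) (a : α → E) :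
    zpowers s ⊔ (closure (Set.range a)).map η = closure ({s} ∪ Set.range fun j => η (a j)) := by
  rw [Subgroup.closure_union, zpowers_eq_closure, MonoidHom.map_closure, ← Set.range_comp]
  rfl

theorem Reachable.zpowers_sup_map_eq (hRP : Reachable Φ R P)
    (h : ∀ z, SemiconjBy s (η z) (η (Φ z))) :
    zpowers s ⊔ P.map η = zpowers s ⊔ R.map η := by
  induction hRP with
  | refl => rfl
  | @tail Q P _ hstep ih =>
    rw [← ih]
    refine le_antisymm ?_ (sup_le_sup_left (map_mono hstep.1) _)
    exact (sup_le_sup_left (map_mono hstep.2) _).trans (zpowers_sup_map_step h Q).le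

end StableLetter

section StablePresentation

variable {X J M : Type*} [Group M]

/-- The homomorphism from the free group on all generators except the stable letter `none`. -/
def baseHom (rels : Set (FreeGroup (Option X))) : FreeGroup X →* PresentedGroup rels :=
  (PresentedGroup.mk rels).comp (FreeGroup.map some)

/-- The relators `s c_j s⁻¹ w_j⁻¹` for generators `c_j` and words `w_j`, with `none` for the stable
letter `s`. Both `mtRels` and `prefRels` have this form. -/
def stableRels (c : J → X) (w : J → FreeGroup X) : Set (FreeGroup (Option X)) :=
  Set.range fun j => FreeGroup.of none * FreeGroup.of (some (c j)) * (FreeGroup.of none)⁻¹ *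
    (FreeGroup.map some (w j))⁻¹

@[simp]
theorem baseHom_of (rels : Set (FreeGroup (Option X))) (x : X) :
    baseHom rels (FreeGroup.of x) = PresentedGroup.of (some x) := by
  simp [baseHom, PresentedGroup.of]

theorem zpowers_sup_range_baseHom (rels : Set (FreeGroup (Option X))) :
    zpowers (PresentedGroup.of none) ⊔ (baseHom rels).range = ⊤ := by
  rw [eq_top_iff, ← PresentedGroup.closure_range_of, closure_le, Set.range_subset_iff]
  rintro (_ | x)
  · exact mem_sup_left (mem_zpowers _)
  · exact mem_sup_right ⟨FreeGroup.of x, baseHom_of rels x⟩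

variable {c : J → X} {w : J → FreeGroup X}

theorem semiconjBy_baseHom (j : J) :
    SemiconjBy (PresentedGroup.of none) (baseHom (stableRels c w) (FreeGroup.of (c j)))
      (baseHom (stableRels c w) (w j)) := by
  have hrel : PresentedGroup.mk (stableRels c w) _ = 1 := PresentedGroup.one_of_mem ⟨j, rfl⟩
  rw [map_mul, map_inv, mul_inv_eq_one, map_mul, map_mul, map_inv, mul_inv_eq_iff_eq_mul] at hrel
  simpa [SemiconjBy, baseHom, PresentedGroup.of] using hrel

theorem exists_monoidHom_stableRels {t : M} {η : FreeGroup X →* M}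
    (h : ∀ j, SemiconjBy t (η (FreeGroup.of (c j))) (η (w j))) :
    ∃ f : PresentedGroup (stableRels c w) →* M,
      f (PresentedGroup.of none) = t ∧ f.comp (baseHom _) = η := by
  let gen : Option X → M := fun o => o.elim t (η ∘ FreeGroup.of)
  have lift_gen : (FreeGroup.lift gen).comp (FreeGroup.map some) = η := by
    ext x
    simp [gen]
  have hrel : ∀ x ∈ stableRels c w, FreeGroup.lift gen x = 1 := by
    rintro _ ⟨j, rfl⟩
    have lift_w : FreeGroup.lift gen (FreeGroup.map some (w j)) = η (w j) :=
      DFunLike.congr_fun lift_gen (w j)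
    simpa [lift_w, mul_inv_eq_one, mul_inv_eq_iff_eq_mul, gen] using (h j).eq
  exact ⟨PresentedGroup.toGroup hrel, PresentedGroup.toGroup.of hrel, lift_gen⟩

end StablePresentation

section Torus

variable {I : Type} {Φ : FreeGroup I →* FreeGroup I}

theorem semiconjBy_mtι (Φ : FreeGroup I →* FreeGroup I) (z : FreeGroup I) :
    SemiconjBy (mtT Φ) (mtι Φ z) (mtι Φ (Φ z)) := by
  have conj_comp : (MulAut.conj (mtT Φ)).toMonoidHom.comp (mtι Φ) = (mtι Φ).comp Φ := by
    ext i
    exact mul_inv_eq_iff_eq_mul.2 (semiconjBy_baseHom (c := id) (w := Φ ∘ FreeGroup.of) i)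
  exact mul_inv_eq_iff_eq_mul.1 (DFunLike.congr_fun conj_comp z)

theorem zpowers_mtT_sup_range_mtι (Φ : FreeGroup I →* FreeGroup I) :
    zpowers (mtT Φ) ⊔ (mtι Φ).range = ⊤ :=
  zpowers_sup_range_baseHom (mtRels Φ)

theorem exists_monoidHom_mt {M : Type*} [Group M] {t : M} {η : FreeGroup I →* M}
    (h : ∀ z, SemiconjBy t (η z) (η (Φ z))) :
    ∃ f : MT Φ →* M, f (mtT Φ) = t ∧ f.comp (mtι Φ) = η :=
  exists_monoidHom_stableRels (c := id) (w := Φ ∘ FreeGroup.of) fun i => h (FreeGroup.of i)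

theorem mtι_injective (hΦ : Injective Φ) : Injective (mtι Φ) := by
  let φ : (⊤ : Subgroup (FreeGroup I)) ≃* Φ.range := topEquiv.trans (MonoidHom.ofInjective hΦ)
  obtain ⟨f, -, hf⟩ := exists_monoidHom_mt (Φ := Φ) (t := HNNExtension.t)
    (η := HNNExtension.of (φ := φ)) fun z => HNNExtension.t_mul_of (φ := φ) ⟨z, trivial⟩
  refine Injective.of_comp (f := f) ?_
  rw [← MonoidHom.coe_comp, hf]
  exact HNNExtension.of_injective _

theorem exists_degree (Φ : FreeGroup I →* FreeGroup I) :
    ∃ deg : MT Φ →* Multiplicative ℤ, deg (mtT Φ) = .ofAdd 1 ∧ deg.comp (mtι Φ) = 1 :=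
  exists_monoidHom_mt fun _ => SemiconjBy.one_right _

end Torus

section OrbitHom

variable {α β G M : Type*} [Group G] [Group M]

/-- The homomorphism sending the generators `inl j` to `u (inl j)` and `inr (k, i)` to the
conjugate of `u (inr k)` by `s ^ i`. -/
def orbitHom (s : G) (u : α ⊕ β → G) : FreeGroup (α ⊕ β × ℕ) →* G :=
  FreeGroup.lift (Sum.elim (u ∘ Sum.inl) fun p => s ^ p.2 * u (Sum.inr p.1) * (s ^ p.2)⁻¹)

/-- The inclusion of the generators that involve no conjugation. -/
def baseIncl : FreeGroup (α ⊕ β) →* FreeGroup (α ⊕ β × ℕ) :=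
  FreeGroup.map (Sum.map id fun k => (k, 0))

/-- The endomorphism that `orbitHom` intertwines with conjugation by `s` when `s` conjugates
`u (inl j)` to the value of the word `w j`. -/
def shiftHom (w : α → FreeGroup (α ⊕ β)) : FreeGroup (α ⊕ β × ℕ) →* FreeGroup (α ⊕ β × ℕ) :=
  FreeGroup.lift (Sum.elim (baseIncl ∘ w) fun p => FreeGroup.of (Sum.inr (p.1, p.2 + 1)))

theorem orbitHom_comp_baseIncl (s : G) (u : α ⊕ β → G) :
    (orbitHom s u).comp baseIncl = FreeGroup.lift u := by
  ext (j | k) <;> simp [orbitHom, baseIncl]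

theorem comp_orbitHom (f : G →* M) (s : G) (u : α ⊕ β → G) :
    f.comp (orbitHom s u) = orbitHom (f s) (f ∘ u) := by
  ext (j | p) <;> simp [orbitHom]

theorem semiconjBy_orbitHom {s : G} {u : α ⊕ β → G} {w : α → FreeGroup (α ⊕ β)}
    (h : ∀ j, SemiconjBy s (u (Sum.inl j)) (FreeGroup.lift u (w j)))
    (z : FreeGroup (α ⊕ β × ℕ)) :
    SemiconjBy s (orbitHom s u z) (orbitHom s u (shiftHom w z)) := by
  have conj_comp :
      (MulAut.conj s).toMonoidHom.comp (orbitHom s u) = (orbitHom s u).comp (shiftHom w) := by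
    ext (j | ⟨k, i⟩)
    · have hj := h j
      rw [← orbitHom_comp_baseIncl s] at hj
      simpa [shiftHom, orbitHom, mul_inv_eq_iff_eq_mul] using hj.eq
    · simp [orbitHom, shiftHom, pow_succ', mul_assoc]
  exact mul_inv_eq_iff_eq_mul.1 (DFunLike.congr_fun conj_comp z)

theorem orbitHom_comp_eq {s : G} {E : Type*} [Group E] {η : E →* G} {Φ : E →* E}
    (h : ∀ z, SemiconjBy s (η z) (η (Φ z))) (v : α ⊕ β → E) :
    orbitHom s (η ∘ v) = η.comp
      (FreeGroup.lift (Sum.elim (v ∘ Sum.inl) fun p => Φ^[p.2] (v (Sum.inr p.1)))) := by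
  ext (j | ⟨k, i⟩)
  · simp [orbitHom]
  · simpa [orbitHom, mul_inv_eq_iff_eq_mul] using (semiconjBy_pow_iterate h i _).eq

end OrbitHom

section PreferredPresentation

variable {I : Type} {Φ : FreeGroup I →* FreeGroup I} {α β : Type*} {v : α ⊕ β → FreeGroup I}
  {w : α → FreeGroup (α ⊕ β)} {f : PresentedGroup (stableRels Sum.inl w) →* MT Φ}

theorem lift_of_some_eq_baseHom {X : Type*} (rels : Set (FreeGroup (Option X))) :
    (FreeGroup.lift fun x => PresentedGroup.of (some x)) = baseHom rels := by
  ext x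
  simp

theorem injective_of_comp_baseHom_eq (hΦ : Injective Φ)
    (hfree : Injective (FreeGroup.lift
      (Sum.elim (v ∘ Sum.inl) fun p : β × ℕ => Φ^[p.2] (v (Sum.inr p.1)))))
    (hs : f (PresentedGroup.of none) = mtT Φ)
    (hf : f.comp (baseHom _) = (mtι Φ).comp (FreeGroup.lift v)) : Injective f := by
  let s : PresentedGroup (stableRels Sum.inl w) := PresentedGroup.of none
  let u (x : α ⊕ β) : PresentedGroup (stableRels Sum.inl w) := PresentedGroup.of (some x)
  have lift_u : FreeGroup.lift u = baseHom _ := lift_of_some_eq_baseHom _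
  have hconj := semiconjBy_orbitHom (s := s) (u := u) (w := w) fun j => by
    simpa [lift_u] using semiconjBy_baseHom (c := Sum.inl) (w := w) j
  have hgen : zpowers s ⊔ (orbitHom s u).range = ⊤ := by
    rw [eq_top_iff, ← zpowers_sup_range_baseHom, ← lift_u, ← orbitHom_comp_baseIncl s,
      MonoidHom.range_comp]
    exact sup_le_sup_left (map_le_range _ _) _
  have map_u : f ∘ u = mtι Φ ∘ v := by
    ext x
    simpa using DFunLike.congr_fun hf (FreeGroup.of x)
  have comp_eq : f.comp (orbitHom s u) = (mtι Φ).comp (FreeGroup.lift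
      (Sum.elim (v ∘ Sum.inl) fun p : β × ℕ => Φ^[p.2] (v (Sum.inr p.1)))) := by
    rw [comp_orbitHom, hs, map_u, orbitHom_comp_eq (semiconjBy_mtι Φ)]
  obtain ⟨deg, hdeg, hdeg_mtι⟩ := exists_degree Φ
  refine injective_of_injective_comp hconj hgen (hs ▸ hdeg) (fun z => ?_) ?_
  · exact (congrArg deg (DFunLike.congr_fun comp_eq z)).trans (DFunLike.congr_fun hdeg_mtι _)
  · rw [comp_eq]
    exact (mtι_injective hΦ).comp hfree

theorem range_eq_of_comp_baseHom_eq (hs : f (PresentedGroup.of none) = mtT Φ)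
    (hf : f.comp (baseHom _) = (mtι Φ).comp (FreeGroup.lift v)) :
    f.range = zpowers (mtT Φ) ⊔ (closure (Set.range v)).map (mtι Φ) := by
  rw [MonoidHom.range_eq_map, ← zpowers_sup_range_baseHom, Subgroup.map_sup, MonoidHom.map_zpowers,
    hs, ← MonoidHom.range_comp, hf, MonoidHom.range_comp, FreeGroup.range_lift_eq_closure]

theorem exists_injective_monoidHom_mt (hΦ : Injective Φ)
    (hfree : Injective (FreeGroup.lift
      (Sum.elim (v ∘ Sum.inl) fun p : β × ℕ => Φ^[p.2] (v (Sum.inr p.1)))))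
    (hw : ∀ j, FreeGroup.lift v (w j) = Φ (v (Sum.inl j))) :
    ∃ f : PresentedGroup (stableRels Sum.inl w) →* MT Φ, Injective f ∧
      f.range = zpowers (mtT Φ) ⊔ (closure (Set.range v)).map (mtι Φ) ∧
      f (PresentedGroup.of none) = mtT Φ ∧ ∀ x, f (PresentedGroup.of (some x)) = mtι Φ (v x) := by
  obtain ⟨f, hs, hf⟩ := exists_monoidHom_stableRels (c := Sum.inl) (w := w) (t := mtT Φ)
    (η := (mtι Φ).comp (FreeGroup.lift v))
    fun j => by simpa [hw] using semiconjBy_mtι Φ (v (Sum.inl j))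
  refine ⟨f, injective_of_comp_baseHom_eq hΦ hfree hs hf, range_eq_of_comp_baseHom_eq hs hf, hs, ?_⟩
  intro x
  simpa using DFunLike.congr_fun hf (FreeGroup.of x)

end PreferredPresentation

end MappingTorus

open MappingTorus

/-- **Main Proposition.** If `H` is a finitely generated subgroup of `M(Φ)` containing `t`,
then `H` has a preferred presentation `⟨t, a₁, …, a_m, b₁, …, b_r | t a_j t⁻¹ w_j⁻¹⟩` with
`w_j = Φ(a_j)` and `⟨A, Φ(A)⟩ = ⟨A, B⟩`. -/
theorem main_proposition {I : Type} (Φ : FreeGroup I →* FreeGroup I)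
    (hΦ : Function.Injective Φ) (H : Subgroup (MT Φ)) (hH : H.FG) (ht : mtT Φ ∈ H) :
    ∃ (m r : ℕ) (a : Fin m → FreeGroup I) (b : Fin r → FreeGroup I)
      (w : Fin m → FreeGroup (Fin m ⊕ Fin r)),
      -- (i) `H = ⟨t, a₁, …, a_m⟩`
      H = Subgroup.closure ({mtT Φ} ∪ Set.range fun j => mtι Φ (a j)) ∧
      -- (ii) evaluating `w_j` under `x_j ↦ a_j`, `y_k ↦ b_k` gives `Φ(a_j)`
      (∀ j : Fin m, FreeGroup.lift (Sum.elim a b) (w j) = Φ (a j)) ∧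
      -- (iii) `⟨A, Φ(A)⟩ = ⟨A, B⟩`
      Subgroup.closure (Set.range a ∪ Set.range fun j => Φ (a j)) =
        Subgroup.closure (Set.range a ∪ Set.range b) ∧
      -- (iv) `s ↦ t`, `x_j ↦ ι(a_j)`, `y_k ↦ ι(b_k)` induces an isomorphism
      -- `⟨s, x_j, y_k | s x_j s⁻¹ w_j⁻¹⟩ ≃ H`
      ∃ e : PresentedGroup (prefRels m r w) ≃* H,
        ((e (PresentedGroup.of none) : H) : MT Φ) = mtT Φ ∧
        (∀ j : Fin m, ((e (PresentedGroup.of (some (Sum.inl j))) : H) : MT Φ) = mtι Φ (a j)) ∧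
        (∀ k : Fin r, ((e (PresentedGroup.of (some (Sum.inr k))) : H) : MT Φ) = mtι Φ (b k)) := by
  have hconj := semiconjBy_mtι Φ
  obtain ⟨R, hR, hRH⟩ :=
    exists_fg_zpowers_sup_map_eq hconj (zpowers_mtT_sup_range_mtι Φ) hH ht
  obtain ⟨m, r, a, b, hRa, hab, hfree⟩ := exists_reachable_injective_lift Φ hR
  have hH_eq := (hRa.zpowers_sup_map_eq hconj).trans hRH
  rw [← closure_range_sumElim] at hab
  have exists_word (j : Fin m) : ∃ w, FreeGroup.lift (Sum.elim a b) w = Φ (a j) := by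
    rw [← MonoidHom.mem_range, FreeGroup.range_lift_eq_closure, hab]
    exact map_mem_step (Subgroup.subset_closure ⟨j, rfl⟩)
  choose w hw using exists_word
  obtain ⟨f, hinj, hrange, hs, hf⟩ := exists_injective_monoidHom_mt hΦ hfree hw
  rw [hab, zpowers_sup_map_step hconj, hH_eq] at hrange
  refine ⟨m, r, a, b, w, ?_, hw, ?_, (MonoidHom.ofInjective hinj).trans (.subgroupCongr hrange), hs,
    fun j => hf (.inl j), fun k => hf (.inr k)⟩
  · rw [← hH_eq, zpowers_sup_map_closure_range]
  · rw [← step_closure_range, ← hab, Set.Sum.elim_range]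
end

section
/- Fix an integer m ≥ 1 and an element b ∈ 𝔽, and define Θ : 𝔽 → 𝔽 by Θ(x) = b · Φ^m(x) · b⁻¹. Then Θ is an injective endomorphism of 𝔽, and there is a group isomorphism from the mapping torus M(Θ) = ⟨s, e_i (i ∈ I) | s e_i s⁻¹ Θ(e_i)⁻¹ (i ∈ I)⟩ onto the subgroup of M(Φ) generated by ι(𝔽) ∪ {t^m}, sending s ↦ ι(b) · t^m and sending each generator e_i of M(Θ) to ι(e_i). -/
/-!
Sending `s` to `ι(b) tᵐ` and extending `ι` defines `F : M(Θ) → M(Φ)`. Every element of `M(Θ)` has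
the form `s⁻ᵃ ι(x) sᶜ`, so if it is killed by `F` then `F(s)^(a - c)` lies in `ι(𝔽)`. The
`t`-exponent sum of `F(s)` is `m ≠ 0`, whence `a = c`, and then `ι(x) = 1` in `M(Φ)`, so `x = 1`
because `M(Φ)` is an HNN extension with base `𝔽`.
-/

theorem closure_union_singleton_mul_left {G : Type*} [Group G] {S : Set G} {h : G}
    (hh : h ∈ Subgroup.closure S) (g : G) :
    Subgroup.closure (S ∪ {h * g}) = Subgroup.closure (S ∪ {g}) := by
  have hS : ∀ k, Subgroup.closure S ≤ Subgroup.closure (S ∪ {k}) :=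
    fun k ↦ Subgroup.closure_mono Set.subset_union_left
  have hmem : ∀ k : G, k ∈ Subgroup.closure (S ∪ {k}) :=
    fun k ↦ Subgroup.subset_closure (Set.mem_union_right S rfl)
  apply le_antisymm <;>
    refine (Subgroup.closure_le _).2 (Set.union_subset (Subgroup.closure_le _ |>.1 (hS _))
      (Set.singleton_subset_iff.2 ?_))
  · exact mul_mem (hS g hh) (hmem g)
  · exact (Subgroup.mul_mem_cancel_left _ (hS _ hh)).1 (hmem (h * g))

theorem injective_of_eq_mul_iterate_mul_inv {G : Type*} [Group G] {φ θ : G → G} {m : ℕ} {b : G}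
    (hφ : Function.Injective φ) (hθ : ∀ x, θ x = b * φ^[m] x * b⁻¹) : Function.Injective θ := by
  rw [funext hθ]
  exact (MulAut.conj b).injective.comp (hφ.iterate m)

theorem semiconjBy_map_of_forall_of {I : Type*} {G : Type*} [Group G] {s : G}
    {f f' : FreeGroup I →* G}
    (h : ∀ i, SemiconjBy s (f (FreeGroup.of i)) (f' (FreeGroup.of i))) (x : FreeGroup I) :
    SemiconjBy s (f x) (f' x) := by
  induction x using FreeGroup.induction_on with
  | C1 => simp only [map_one, SemiconjBy.one_right]
  | of i => exact h i
  | inv_of i hi => simpa only [map_inv] using hi.inv_right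
  | mul x y hx hy => simpa only [map_mul] using hx.mul_right hy

namespace MT

variable {I : Type} {Φ : FreeGroup I →* FreeGroup I}

section Lift

variable {G : Type*} [Group G] (f : FreeGroup I →* G) (s : G)
  (h : ∀ i, SemiconjBy s (f (FreeGroup.of i)) (f (Φ (FreeGroup.of i))))

theorem lift_elim_map_some (x : FreeGroup I) :
    FreeGroup.lift (fun o : Option I ↦ o.elim s fun i ↦ f (FreeGroup.of i))
      (FreeGroup.map some x) = f x := by
  suffices (FreeGroup.lift _).comp (FreeGroup.map some) = f from DFunLike.congr_fun this x
  ext i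
  simp

/-- The homomorphism out of the mapping torus given by its universal property: it extends `f`
and sends the stable letter to `s`. The relations only need to hold on the generators `eᵢ`. -/
def lift : MT Φ →* G :=
  PresentedGroup.toGroup (f := fun o : Option I ↦ o.elim s fun i ↦ f (FreeGroup.of i)) <| by
    rintro _ ⟨i, rfl⟩
    simpa [lift_elim_map_some, mul_inv_eq_one, mul_inv_eq_iff_eq_mul] using (h i).eq

@[simp]
theorem lift_mtT : lift f s h (mtT Φ) = s :=
  PresentedGroup.toGroup.of _

@[simp]
theorem lift_mtι (x : FreeGroup I) : lift f s h (mtι Φ x) = f x :=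
  lift_elim_map_some f s x

end Lift

theorem semiconjBy_mtT (x : FreeGroup I) : SemiconjBy (mtT Φ) (mtι Φ x) (mtι Φ (Φ x)) := by
  refine semiconjBy_map_of_forall_of (f := mtι Φ) (f' := (mtι Φ).comp Φ) (fun i ↦ ?_) x
  have hrel : PresentedGroup.mk (mtRels Φ) _ = 1 := PresentedGroup.one_of_mem ⟨i, rfl⟩
  rw [map_mul, map_inv, mul_inv_eq_one, map_mul, map_inv, mul_inv_eq_iff_eq_mul, map_mul] at hrel
  exact hrel

theorem semiconjBy_mtT_pow (n : ℕ) (x : FreeGroup I) :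
    SemiconjBy (mtT Φ ^ n) (mtι Φ x) (mtι Φ (Φ^[n] x)) := by
  induction n with
  | zero => simp
  | succ n ih =>
    rw [pow_succ', Function.iterate_succ_apply']
    exact (semiconjBy_mtT _).mul_left ih

theorem closure_range_mtι_union_mtT :
    Subgroup.closure (Set.range (mtι Φ) ∪ {mtT Φ}) = ⊤ := by
  rw [eq_top_iff, ← PresentedGroup.closure_range_of (mtRels Φ)]
  refine Subgroup.closure_mono ?_
  rintro _ ⟨_ | i, rfl⟩
  · exact Or.inr rfl
  · exact Or.inl ⟨FreeGroup.of i, rfl⟩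

theorem range_eq_closure {G : Type*} [Group G] (F : MT Φ →* G) :
    F.range = Subgroup.closure (Set.range (fun x ↦ F (mtι Φ x)) ∪ {F (mtT Φ)}) := by
  rw [MonoidHom.range_eq_map, ← closure_range_mtι_union_mtT, MonoidHom.map_closure,
    Set.image_union, Set.image_singleton, ← Set.range_comp]
  rfl

theorem mtι_mul_mtT_pow_inv_mul_mtι (a : ℕ) (x y : FreeGroup I) :
    mtι Φ y * ((mtT Φ ^ a)⁻¹ * mtι Φ x) = (mtT Φ ^ a)⁻¹ * mtι Φ (Φ^[a] y * x) := by
  rw [map_mul, ← mul_assoc, ← mul_assoc, (semiconjBy_mtT_pow a y).inv_symm_left.eq]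

theorem exists_eq_mtT_pow_inv_mul_mtι_mul_mtT_pow (g : MT Φ) :
    ∃ (a c : ℕ) (x : FreeGroup I), g = (mtT Φ ^ a)⁻¹ * mtι Φ x * mtT Φ ^ c := by
  have hg : g ∈ Subgroup.closure (Set.range (mtι Φ) ∪ {mtT Φ}) := by
    simp only [closure_range_mtι_union_mtT, Subgroup.mem_top]
  induction hg using Subgroup.closure_induction_left with
  | one => exact ⟨0, 0, 1, by simp⟩
  | mul_left u hu v _ ih =>
    obtain ⟨a, c, x, rfl⟩ := ih
    rcases hu with ⟨y, rfl⟩ | rfl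
    · exact ⟨a, c, Φ^[a] y * x, by rw [← mul_assoc, mtι_mul_mtT_pow_inv_mul_mtι]⟩
    · cases a with
      | zero =>
        refine ⟨0, c + 1, Φ x, ?_⟩
        simp only [pow_zero, inv_one, one_mul, pow_succ', ← mul_assoc, (semiconjBy_mtT x).eq]
      | succ a => exact ⟨a, c, x, by group⟩
  | inv_mul_cancel u hu v _ ih =>
    obtain ⟨a, c, x, rfl⟩ := ih
    rcases hu with ⟨y, rfl⟩ | rfl
    · exact ⟨a, c, Φ^[a] y⁻¹ * x, by rw [← map_inv, ← mul_assoc, mtι_mul_mtT_pow_inv_mul_mtι]⟩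
    · exact ⟨a + 1, c, x, by group⟩

theorem injective_of_comp_mtι_of_zpow_mem_range {G : Type*} [Group G] {F : MT Φ →* G}
    (hι : Function.Injective (F.comp (mtι Φ)))
    (ht : ∀ k : ℤ, F (mtT Φ) ^ k ∈ (F.comp (mtι Φ)).range → k = 0) : Function.Injective F := by
  rw [injective_iff_map_eq_one]
  intro g hg
  obtain ⟨a, c, x, rfl⟩ := exists_eq_mtT_pow_inv_mul_mtι_mul_mtT_pow g
  have hx : F (mtι Φ x) = F (mtT Φ) ^ (a - c : ℤ) := by
    rw [map_mul, map_mul, map_inv, map_pow, map_pow, mul_eq_one_iff_eq_inv,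
      inv_mul_eq_iff_eq_mul] at hg
    rw [hg, zpow_sub, zpow_natCast, zpow_natCast]
  have hac : (a - c : ℤ) = 0 := ht _ ⟨x, hx⟩
  obtain rfl : a = c := by lia
  obtain rfl : x = 1 := hι (by simpa using hx)
  simp

theorem mtι_injective (hΦ : Function.Injective Φ) : Function.Injective (mtι Φ) := by
  let φ : (⊤ : Subgroup (FreeGroup I)) ≃* Φ.range :=
    Subgroup.topEquiv.trans (MonoidHom.ofInjective hΦ)
  let F : MT Φ →* HNNExtension (FreeGroup I) ⊤ Φ.range φ :=
    lift HNNExtension.of HNNExtension.t fun i ↦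
      HNNExtension.t_mul_of (φ := φ) ⟨FreeGroup.of i, trivial⟩
  have hF : F ∘ mtι Φ = HNNExtension.of := funext (lift_mtι _ _ _)
  exact .of_comp (f := F) (hF ▸ HNNExtension.of_injective φ)

/-- The `t`-exponent sum `M(Φ) → ℤ`, with `ℤ` written multiplicatively. -/
def exponentSum (Φ : FreeGroup I →* FreeGroup I) : MT Φ →* Multiplicative ℤ :=
  lift 1 (Multiplicative.ofAdd 1) fun _ ↦ SemiconjBy.one_right _

@[simp]
theorem exponentSum_mtT : exponentSum Φ (mtT Φ) = Multiplicative.ofAdd 1 :=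
  lift_mtT _ _ _

@[simp]
theorem exponentSum_mtι (x : FreeGroup I) : exponentSum Φ (mtι Φ x) = 1 :=
  lift_mtι _ _ _ x

section TwistedPower

variable {Θ : FreeGroup I →* FreeGroup I} {m : ℕ} {b : FreeGroup I}

theorem semiconjBy_mtι_mul_mtT_pow (hΘ : ∀ x, Θ x = b * Φ^[m] x * b⁻¹) (x : FreeGroup I) :
    SemiconjBy (mtι Φ b * mtT Φ ^ m) (mtι Φ x) (mtι Φ (Θ x)) := by
  have hb : SemiconjBy (mtι Φ b) (mtι Φ (Φ^[m] x)) (mtι Φ (Θ x)) := by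
    simp only [SemiconjBy, hΘ, ← map_mul, inv_mul_cancel_right]
  exact hb.mul_left (semiconjBy_mtT_pow m x)

variable (hΘ : ∀ x, Θ x = b * Φ^[m] x * b⁻¹)

/-- The homomorphism `M(Θ) → M(Φ)` extending `ι` and sending the stable letter of `M(Θ)` to
`ι(b) tᵐ`, where `Θ` is `Φᵐ` followed by conjugation by `b`. -/
def twistedPowerHom : MT Θ →* MT Φ :=
  lift (mtι Φ) (mtι Φ b * mtT Φ ^ m) fun _ ↦ semiconjBy_mtι_mul_mtT_pow hΘ _

@[simp]
theorem twistedPowerHom_mtT : twistedPowerHom hΘ (mtT Θ) = mtι Φ b * mtT Φ ^ m :=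
  lift_mtT _ _ _

@[simp]
theorem twistedPowerHom_mtι (x : FreeGroup I) : twistedPowerHom hΘ (mtι Θ x) = mtι Φ x :=
  lift_mtι _ _ _ x

theorem twistedPowerHom_injective (hΦ : Function.Injective Φ) (hm : m ≠ 0) :
    Function.Injective (twistedPowerHom hΘ) := by
  have hι : Function.Injective ((twistedPowerHom hΘ).comp (mtι Θ)) :=
    fun x y hxy ↦ mtι_injective hΦ (by simpa using hxy)
  refine injective_of_comp_mtι_of_zpow_mem_range hι ?_
  rintro k ⟨x, hx⟩
  have hsum : k * (m : ℤ) = 0 := by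
    simpa using congrArg (fun g ↦ (exponentSum Φ g).toAdd) hx.symm
  simpa [hm] using hsum

theorem range_twistedPowerHom :
    (twistedPowerHom hΘ).range = Subgroup.closure (Set.range (mtι Φ) ∪ {mtT Φ ^ m}) := by
  simp only [range_eq_closure, twistedPowerHom_mtT, twistedPowerHom_mtι]
  exact closure_union_singleton_mul_left (Subgroup.subset_closure (Set.mem_range_self b)) _

end TwistedPower

end MT

/-- Fix `m ≥ 1` and `b ∈ 𝔽`, and let `Θ(x) = b · Φᵐ(x) · b⁻¹`. Then `Θ` is an injective
endomorphism of `𝔽`, and there is an isomorphism from `M(Θ)` onto the subgroup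
`⟨ι(𝔽), tᵐ⟩` of `M(Φ)` sending `s ↦ ι(b) · tᵐ` and each generator `eᵢ` of `M(Θ)`
to `ι(eᵢ)`. -/
theorem mappingTorus_of_twisted_power {I : Type} (Φ : FreeGroup I →* FreeGroup I)
    (hΦ : Function.Injective Φ) (m : ℕ) (hm : 1 ≤ m) (b : FreeGroup I)
    (Θ : FreeGroup I →* FreeGroup I)
    (hΘ : ∀ x : FreeGroup I, Θ x = b * (⇑Φ)^[m] x * b⁻¹) :
    Function.Injective Θ ∧
    ∃ e : MT Θ ≃*
        (Subgroup.closure (Set.range (mtι Φ) ∪ {(mtT Φ) ^ m}) : Subgroup (MT Φ)),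
      ((e (mtT Θ) : Subgroup.closure (Set.range (mtι Φ) ∪ {(mtT Φ) ^ m})) : MT Φ) =
          mtι Φ b * (mtT Φ) ^ m ∧
      ∀ i : I,
        ((e (mtι Θ (FreeGroup.of i)) :
            Subgroup.closure (Set.range (mtι Φ) ∪ {(mtT Φ) ^ m})) : MT Φ) =
          mtι Φ (FreeGroup.of i) := by
  have hF := MT.twistedPowerHom_injective hΘ hΦ (Nat.one_le_iff_ne_zero.1 hm)
  exact ⟨injective_of_eq_mul_iterate_mul_inv hΦ hΘ,
    (MonoidHom.ofInjective hF).trans (MulEquiv.subgroupCongr (MT.range_twistedPowerHom hΘ)),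
    MT.twistedPowerHom_mtT hΘ, fun i ↦ MT.twistedPowerHom_mtι hΘ (FreeGroup.of i)⟩
end

section
/- For every d ≥ 0 and every generator x ∈ A ∪ B, the element t^d x t^{-d} of F can be written as n·v with n ∈ N and v ∈ ⟨S'_d⟩, where S'_d = A ∪ ⋃_{l=0}^{d} t^l B t^{-l}. -/
/-- The free group `F` on the disjoint union `{t} ∪ A ∪ B` with `A = {a₁, …, a_m}` and
`B = {b₁, …, b_r}`: `none` is `t`, `some (Sum.inl j)` is `a_j`, `some (Sum.inr k)` is `b_k`. -/
abbrev FG (m r : ℕ) : Type := FreeGroup (Option (Fin m ⊕ Fin r))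

/-- The generator `t` of `F`. -/
def tGen (m r : ℕ) : FG m r := FreeGroup.of none

/-- The generator `a_j` of `F`. -/
def aGen (m r : ℕ) (j : Fin m) : FG m r := FreeGroup.of (some (Sum.inl j))

/-- The generator `b_k` of `F`. -/
def bGen (m r : ℕ) (k : Fin r) : FG m r := FreeGroup.of (some (Sum.inr k))

/-- The normal closure `N` in `F` of the finite set `{t a_j t⁻¹ w_j⁻¹ : 1 ≤ j ≤ m}`. -/
def Nsub (m r : ℕ) (w : Fin m → FG m r) : Subgroup (FG m r) :=
  Subgroup.normalClosure (Set.range fun j : Fin m =>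
    tGen m r * aGen m r j * (tGen m r)⁻¹ * (w j)⁻¹)

/-- The set `S'_d = A ∪ ⋃_{0 ≤ l ≤ d} tˡ B t⁻ˡ ⊆ F`. -/
def Sset (m r : ℕ) (d : ℕ) : Set (FG m r) :=
  Set.range (aGen m r) ∪
    {y | ∃ l : ℕ, l ≤ d ∧ ∃ k : Fin r, y = (tGen m r) ^ l * bGen m r k * ((tGen m r) ^ l)⁻¹}

/-!
Since `N` is normal, factoring `tᵈ x t⁻ᵈ` as `n · v` amounts to `tᵈ x t⁻ᵈ ∈ N ⊔ ⟨S'_d⟩`. Conjugation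
by `tᵈ` is a homomorphism, so having this for the generators in `A ∪ B` is the same as having it for
all of `N ⊔ ⟨A ∪ B⟩`, and the latter form is what makes induction on `d` work:
`tᵈ⁺¹ a t⁻ᵈ⁻¹` is the conjugate by `tᵈ` of `t a t⁻¹`, which lies in `N ⊔ ⟨A ∪ B⟩` by the relators,
while `tᵈ b t⁻ᵈ` belongs to `S'_d` outright.
-/

/-- The set `A ∪ ⋃_{0 ≤ l ≤ d} tˡ B t⁻ˡ` in an arbitrary group: the generating set `S'_d` for
arbitrary sets `A` and `B` and an arbitrary element `t`. -/
def truncatedConjugates {G : Type*} [Group G] (t : G) (A B : Set G) (d : ℕ) : Set G :=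
  A ∪ {y | ∃ l ≤ d, ∃ b ∈ B, y = t ^ l * b * (t ^ l)⁻¹}

section

variable {G : Type*} [Group G] {t : G} {A B : Set G}

theorem truncatedConjugates_mono : Monotone (truncatedConjugates t A B) :=
  fun _ _ hde => Set.union_subset_union_right A fun _ ⟨l, hl, hy⟩ => ⟨l, hl.trans hde, hy⟩

theorem conj_pow_mem_truncatedConjugates (d : ℕ) {b : G} (hb : b ∈ B) :
    t ^ d * b * (t ^ d)⁻¹ ∈ truncatedConjugates t A B d :=
  Or.inr ⟨d, le_rfl, b, hb, rfl⟩

theorem sup_closure_le_comap_conj {N H : Subgroup G} [hN : N.Normal] {S : Set G} {g : G}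
    (hNH : N ≤ H) (hS : ∀ s ∈ S, g * s * g⁻¹ ∈ H) :
    N ⊔ Subgroup.closure S ≤ H.comap (MulAut.conj g).toMonoidHom :=
  sup_le (fun n hn => hNH (hN.conj_mem n hn g)) ((Subgroup.closure_le _).2 hS)

theorem sup_closure_le_comap_conj_pow {N : Subgroup G} [N.Normal]
    (hA : ∀ a ∈ A, t * a * t⁻¹ ∈ N ⊔ Subgroup.closure (A ∪ B)) (d : ℕ) :
    N ⊔ Subgroup.closure (A ∪ B) ≤
      (N ⊔ Subgroup.closure (truncatedConjugates t A B d)).comap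
        (MulAut.conj (t ^ d)).toMonoidHom := by
  have subset_sup (e : ℕ) : truncatedConjugates t A B e ⊆
      (N ⊔ Subgroup.closure (truncatedConjugates t A B e) : Subgroup G) :=
    fun _ hy => Subgroup.mem_sup_right (Subgroup.subset_closure hy)
  induction d with
  | zero =>
    refine sup_closure_le_comap_conj le_sup_left ?_
    rintro x (hxA | hxB)
    · simpa using subset_sup 0 (Or.inl hxA)
    · exact subset_sup 0 (conj_pow_mem_truncatedConjugates 0 hxB)
  | succ d ih =>
    refine sup_closure_le_comap_conj le_sup_left ?_
    rintro x (hxA | hxB)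
    · have conj_mem : t ^ d * (t * x * t⁻¹) * (t ^ d)⁻¹ ∈
          N ⊔ Subgroup.closure (truncatedConjugates t A B d) := ih (hA x hxA)
      have conj_succ : t ^ (d + 1) * x * (t ^ (d + 1))⁻¹ =
          t ^ d * (t * x * t⁻¹) * (t ^ d)⁻¹ := by
        simp only [pow_succ, mul_inv_rev, mul_assoc]
      rw [conj_succ]
      exact sup_le_sup_left
        (Subgroup.closure_mono (truncatedConjugates_mono d.le_succ)) N conj_mem
    · exact subset_sup (d + 1) (conj_pow_mem_truncatedConjugates (d + 1) hxB)

theorem conjugated_generator_factorization_general {N : Subgroup G} [N.Normal]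
    (hA : ∀ a ∈ A, t * a * t⁻¹ ∈ N ⊔ Subgroup.closure (A ∪ B)) (d : ℕ) {x : G}
    (hx : x ∈ Subgroup.closure (A ∪ B)) :
    ∃ n ∈ N, ∃ v ∈ Subgroup.closure (truncatedConjugates t A B d),
      t ^ d * x * (t ^ d)⁻¹ = n * v := by
  have conj_mem : t ^ d * x * (t ^ d)⁻¹ ∈
      N ⊔ Subgroup.closure (truncatedConjugates t A B d) :=
    sup_closure_le_comap_conj_pow hA d (Subgroup.mem_sup_right hx)
  simpa only [eq_comm] using Subgroup.mem_sup_of_normal_left.mp conj_mem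

end

instance Nsub_normal (m r : ℕ) (w : Fin m → FG m r) : (Nsub m r w).Normal :=
  Subgroup.normalClosure_normal

theorem Sset_eq_truncatedConjugates (m r d : ℕ) :
    Sset m r d =
      truncatedConjugates (tGen m r) (Set.range (aGen m r)) (Set.range (bGen m r)) d := by
  simp only [Sset, truncatedConjugates, Set.exists_range_iff]

theorem tGen_conj_aGen_mem_sup {m r : ℕ} {w : Fin m → FG m r} {H : Subgroup (FG m r)}
    {j : Fin m} (hw : w j ∈ H) :
    tGen m r * aGen m r j * (tGen m r)⁻¹ ∈ Nsub m r w ⊔ H := by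
  have relator_mem : tGen m r * aGen m r j * (tGen m r)⁻¹ * (w j)⁻¹ ∈ Nsub m r w :=
    Subgroup.subset_normalClosure ⟨j, rfl⟩
  simpa only [inv_mul_cancel_right] using Subgroup.mul_mem_sup relator_mem hw

/-- For every `d ≥ 0` and every generator `x ∈ A ∪ B`, the element `tᵈ x t⁻ᵈ` of `F` can be
written as `n · v` with `n ∈ N` and `v ∈ ⟨S'_d⟩`. -/
theorem conjugated_generator_factorization (m r : ℕ) (w : Fin m → FG m r)
    (hw : ∀ j : Fin m,
      w j ∈ Subgroup.closure (Set.range (aGen m r) ∪ Set.range (bGen m r)))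
    (d : ℕ) (x : FG m r) (hx : x ∈ Set.range (aGen m r) ∪ Set.range (bGen m r)) :
    ∃ n ∈ Nsub m r w, ∃ v ∈ Subgroup.closure (Sset m r d),
      (tGen m r) ^ d * x * ((tGen m r) ^ d)⁻¹ = n * v := by
  rw [Sset_eq_truncatedConjugates]
  exact conjugated_generator_factorization_general
    (Set.forall_mem_range.2 fun j => tGen_conj_aGen_mem_sup (hw j)) d (Subgroup.subset_closure hx)
end

section
/- For every element k of F whose exponent sum in the generator t is zero, there exist an integer z, a natural number d ≥ 0, an element n ∈ N, and an element v ∈ ⟨S'_d⟩ such that t^z k t^{-z} = n·v. -/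
/-- The exponent sum in `t`, i.e. the homomorphism `F → ℤ` (written multiplicatively) sending
`t ↦ 1` and each element of `A ∪ B` to `0`. -/
def expT (m r : ℕ) : FG m r →* Multiplicative ℤ :=
  FreeGroup.lift fun o : Option (Fin m ⊕ Fin r) =>
    o.elim (Multiplicative.ofAdd 1) (fun _ => 1)

/-!
Let `H = ⋃ d, N ⟨S'_d⟩`. It is stable under `x ↦ t x t⁻¹`: modulo `N` this map sends `a_j` to
`w_j ∈ ⟨A ∪ B⟩`, and it sends `tˡ b t⁻ˡ` to the same expression with `l + 1`. Hence the subgroups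
`t⁻ˡ H tˡ` increase with `l`, and their union `K` is normalised by `t`. As `F` is generated by `H`
and `t`, the subgroup `K` is normal and every element of `F` is of the form `x tᶻ` with `x ∈ K`.
The exponent sum of `x tᶻ` is `z`, so an element of exponent sum zero lies in some `t⁻ˡ H tˡ`.
-/

section ConjUnion

variable {G M : Type*} [Group G] [Group M] {t x : G} {H : Subgroup G}

/-- The union of the subgroups `t⁻ˡ H tˡ` over `l : ℕ`, meant for `H` with `t H t⁻¹ ≤ H`. It is
encoded as a supremum, which is the union because the family is then increasing. -/
def conjUnion (t : G) (H : Subgroup G) : Subgroup G :=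
  ⨆ l : ℕ, H.comap (MulAut.conj (t ^ l)).toMonoidHom

theorem le_conjUnion : H ≤ conjUnion t H :=
  le_iSup_of_le 0 fun x hx => by simpa using hx

theorem mem_conjUnion (hH : ∀ h ∈ H, t * h * t⁻¹ ∈ H) :
    x ∈ conjUnion t H ↔ ∃ l : ℕ, t ^ l * x * (t ^ l)⁻¹ ∈ H := by
  have hmono : Monotone fun l : ℕ => H.comap (MulAut.conj (t ^ l)).toMonoidHom :=
    monotone_nat_of_le_succ fun l y hy => by
      simpa [pow_succ', mul_assoc] using hH _ hy
  exact Subgroup.mem_iSup_of_directed hmono.directed_le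

theorem mem_normalizer_conjUnion (hH : ∀ h ∈ H, t * h * t⁻¹ ∈ H) :
    t ∈ Subgroup.normalizer (conjUnion t H : Set G) := by
  refine Subgroup.mem_normalizer_iff.2 fun x => ?_
  simp only [mem_conjUnion hH]
  constructor
  · rintro ⟨l, hl⟩
    have hcomm : t ^ l * (t * x * t⁻¹) * (t ^ l)⁻¹ = t * (t ^ l * x * (t ^ l)⁻¹) * t⁻¹ := by
      group
    exact ⟨l, hcomm ▸ hH _ hl⟩
  · rintro ⟨l, hl⟩
    exact ⟨l + 1, by simpa [pow_succ, mul_assoc] using hl⟩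

theorem normal_conjUnion (hH : ∀ h ∈ H, t * h * t⁻¹ ∈ H) (hgen : H ⊔ Subgroup.zpowers t = ⊤) :
    (conjUnion t H).Normal := by
  refine Subgroup.normalizer_eq_top_iff.1 (top_le_iff.1 (hgen ▸ sup_le ?_ ?_))
  · exact le_conjUnion.trans Subgroup.le_normalizer
  · exact Subgroup.zpowers_le.2 (mem_normalizer_conjUnion hH)

theorem ker_le_conjUnion (hH : ∀ h ∈ H, t * h * t⁻¹ ∈ H) (hgen : H ⊔ Subgroup.zpowers t = ⊤)
    (φ : G →* M) (hφH : H ≤ φ.ker) (hφt : ¬IsOfFinOrder (φ t)) : φ.ker ≤ conjUnion t H := by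
  intro k hk
  have hnormal := normal_conjUnion hH hgen
  have hle : conjUnion t H ≤ φ.ker := by
    intro x hx
    obtain ⟨l, hl⟩ := (mem_conjUnion hH).1 hx
    simpa [MonoidHom.mem_ker] using hφH hl
  have htop : conjUnion t H ⊔ Subgroup.zpowers t = ⊤ :=
    top_le_iff.1 (hgen ▸ sup_le_sup_right le_conjUnion _)
  obtain ⟨x, hx, _, ⟨z, rfl⟩, rfl⟩ :=
    Subgroup.mem_sup_of_normal_left.1 (htop ▸ Subgroup.mem_top k)
  have hz : φ t ^ z = φ t ^ (0 : ℤ) := by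
    simpa [MonoidHom.mem_ker.1 (hle hx)] using hk
  obtain rfl : z = 0 := injective_zpow_iff_not_isOfFinOrder.2 hφt hz
  simpa using hx

end ConjUnion

section HNNBase

variable {G M ι κ : Type*} [Group G] [Group M] {t : G} {a : ι → G} {b : κ → G} {w : ι → G}

/-- The relators saying that `t` conjugates `a_j` to `w_j`, as in an HNN extension with stable
letter `t`. -/
def hnnRelators (t : G) (a w : ι → G) : Set G :=
  Set.range fun j => t * a j * t⁻¹ * (w j)⁻¹

/-- The set `S'_d = A ∪ ⋃_{0 ≤ l ≤ d} tˡ B t⁻ˡ` in an arbitrary group, with `A` and `B` given as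
the ranges of the families `a` and `b`. -/
def baseGenerators (t : G) (a : ι → G) (b : κ → G) (d : ℕ) : Set G :=
  Set.range a ∪ {y | ∃ l : ℕ, l ≤ d ∧ ∃ k, y = t ^ l * b k * (t ^ l)⁻¹}

/-- The union over `d` of the products `N ⟨S'_d⟩`, where `N` is the normal closure of the relators;
these subgroups increase with `d`, so that the supremum is the union. -/
def hnnBase (t : G) (a : ι → G) (b : κ → G) (w : ι → G) : Subgroup G :=
  ⨆ d, Subgroup.normalClosure (hnnRelators t a w) ⊔ Subgroup.closure (baseGenerators t a b d)

theorem baseGenerators_mono : Monotone (baseGenerators t a b) := by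
  rintro d e hde _ (ha | ⟨l, hl, k, rfl⟩)
  · exact Or.inl ha
  · exact Or.inr ⟨l, hl.trans hde, k, rfl⟩

theorem mem_hnnBase {x : G} :
    x ∈ hnnBase t a b w ↔ ∃ d, ∃ n ∈ Subgroup.normalClosure (hnnRelators t a w),
      ∃ v ∈ Subgroup.closure (baseGenerators t a b d), n * v = x := by
  have hmono : Monotone fun d => Subgroup.normalClosure (hnnRelators t a w) ⊔
      Subgroup.closure (baseGenerators t a b d) :=
    fun _ _ hde => sup_le_sup_left (Subgroup.closure_mono (baseGenerators_mono hde)) _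
  simp only [hnnBase, Subgroup.mem_iSup_of_directed hmono.directed_le,
    Subgroup.mem_sup_of_normal_left]

theorem normalClosure_hnnRelators_le_hnnBase :
    Subgroup.normalClosure (hnnRelators t a w) ≤ hnnBase t a b w :=
  le_iSup_of_le 0 le_sup_left

theorem closure_baseGenerators_le_hnnBase (d : ℕ) :
    Subgroup.closure (baseGenerators t a b d) ≤ hnnBase t a b w :=
  le_iSup_of_le d le_sup_right

theorem conj_pow_mem_hnnBase (l : ℕ) (k : κ) : t ^ l * b k * (t ^ l)⁻¹ ∈ hnnBase t a b w :=
  closure_baseGenerators_le_hnnBase l (Subgroup.subset_closure (Or.inr ⟨l, le_rfl, k, rfl⟩))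

theorem closure_range_union_le_hnnBase :
    Subgroup.closure (Set.range a ∪ Set.range b) ≤ hnnBase t a b w := by
  rw [Subgroup.closure_le]
  rintro _ (ha | ⟨k, rfl⟩)
  · exact closure_baseGenerators_le_hnnBase 0 (Subgroup.subset_closure (Or.inl ha))
  · have hmem : t ^ 0 * b k * (t ^ 0)⁻¹ ∈ hnnBase t a b w := conj_pow_mem_hnnBase 0 k
    simpa using hmem

theorem conj_mem_hnnBase (hw : ∀ j, w j ∈ Subgroup.closure (Set.range a ∪ Set.range b)) :
    ∀ h ∈ hnnBase t a b w, t * h * t⁻¹ ∈ hnnBase t a b w := by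
  suffices hnnBase t a b w ≤ (hnnBase t a b w).comap (MulAut.conj t).toMonoidHom from this
  refine iSup_le fun d => sup_le (fun n hn => ?_) ((Subgroup.closure_le _).2 ?_)
  · exact normalClosure_hnnRelators_le_hnnBase
      (Subgroup.normalClosure_normal.conj_mem n hn t)
  · rintro _ (⟨j, rfl⟩ | ⟨l, -, k, rfl⟩)
    · have hrel : t * a j * t⁻¹ * (w j)⁻¹ ∈ hnnBase t a b w :=
        normalClosure_hnnRelators_le_hnnBase (Subgroup.subset_normalClosure ⟨j, rfl⟩)
      simpa using mul_mem hrel (closure_range_union_le_hnnBase (hw j))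
    · have hmem : t ^ (l + 1) * b k * (t ^ (l + 1))⁻¹ ∈ hnnBase t a b w :=
        conj_pow_mem_hnnBase (l + 1) k
      simpa [pow_succ', mul_assoc] using hmem

theorem hnnBase_le_ker (hw : ∀ j, w j ∈ Subgroup.closure (Set.range a ∪ Set.range b))
    (φ : G →* M) (hφa : ∀ j, φ (a j) = 1) (hφb : ∀ k, φ (b k) = 1) :
    hnnBase t a b w ≤ φ.ker := by
  have hφw (j : ι) : φ (w j) = 1 := by
    refine (Subgroup.closure_le φ.ker).2 ?_ (hw j)
    rintro _ (⟨j, rfl⟩ | ⟨k, rfl⟩)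
    exacts [hφa j, hφb k]
  refine iSup_le fun d => sup_le (Subgroup.normalClosure_le_normal ?_)
    ((Subgroup.closure_le _).2 ?_)
  · rintro _ ⟨j, rfl⟩
    simp [MonoidHom.mem_ker, hφa, hφw]
  · rintro _ (⟨j, rfl⟩ | ⟨l, -, k, rfl⟩)
    · exact hφa j
    · simp [MonoidHom.mem_ker, hφb]

theorem hnnBase_sup_zpowers_eq_top
    (hgen : Subgroup.closure (insert t (Set.range a ∪ Set.range b)) = ⊤) :
    hnnBase t a b w ⊔ Subgroup.zpowers t = ⊤ := by
  rw [← top_le_iff, ← hgen, Subgroup.closure_le, Set.insert_subset_iff]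
  exact ⟨Subgroup.mem_sup_right (Subgroup.mem_zpowers t), fun x hx =>
    Subgroup.mem_sup_left (closure_range_union_le_hnnBase (Subgroup.subset_closure hx))⟩

theorem zero_exponent_sum_factorization_general
    (hgen : Subgroup.closure (insert t (Set.range a ∪ Set.range b)) = ⊤)
    (hw : ∀ j, w j ∈ Subgroup.closure (Set.range a ∪ Set.range b))
    (φ : G →* M) (hφt : ¬IsOfFinOrder (φ t)) (hφa : ∀ j, φ (a j) = 1) (hφb : ∀ k, φ (b k) = 1)
    {k : G} (hk : φ k = 1) :
    ∃ l d : ℕ, ∃ n ∈ Subgroup.normalClosure (hnnRelators t a w),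
      ∃ v ∈ Subgroup.closure (baseGenerators t a b d), t ^ l * k * (t ^ l)⁻¹ = n * v := by
  have hstable := conj_mem_hnnBase (t := t) hw
  have hmem : k ∈ conjUnion t (hnnBase t a b w) :=
    ker_le_conjUnion hstable (hnnBase_sup_zpowers_eq_top hgen) φ
      (hnnBase_le_ker hw φ hφa hφb) hφt hk
  obtain ⟨l, hl⟩ := (mem_conjUnion hstable).1 hmem
  obtain ⟨d, n, hn, v, hv, hnv⟩ := mem_hnnBase.1 hl
  exact ⟨l, d, n, hn, v, hv, hnv.symm⟩

end HNNBase

theorem closure_insert_tGen_eq_top (m r : ℕ) :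
    Subgroup.closure (insert (tGen m r) (Set.range (aGen m r) ∪ Set.range (bGen m r))) = ⊤ := by
  rw [← top_le_iff, ← FreeGroup.closure_range_of]
  refine Subgroup.closure_mono ?_
  rintro _ ⟨_ | j | k, rfl⟩
  exacts [Or.inl rfl, Or.inr (Or.inl ⟨j, rfl⟩), Or.inr (Or.inr ⟨k, rfl⟩)]

theorem expT_tGen (m r : ℕ) : expT m r (tGen m r) = Multiplicative.ofAdd 1 := by
  simp [expT, tGen]

theorem expT_aGen (m r : ℕ) (j : Fin m) : expT m r (aGen m r j) = 1 := by
  simp [expT, aGen]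

theorem expT_bGen (m r : ℕ) (k : Fin r) : expT m r (bGen m r k) = 1 := by
  simp [expT, bGen]

theorem not_isOfFinOrder_expT_tGen (m r : ℕ) : ¬IsOfFinOrder (expT m r (tGen m r)) := by
  rw [expT_tGen, isOfFinOrder_ofAdd_iff, isOfFinAddOrder_iff_eq_zero]
  exact one_ne_zero

/-- For every element `k` of `F` whose exponent sum in `t` is zero, there exist `z ∈ ℤ`,
`d ≥ 0`, `n ∈ N` and `v ∈ ⟨S'_d⟩` with `tᶻ k t⁻ᶻ = n · v`. -/
theorem zero_exponent_sum_factorization (m r : ℕ) (w : Fin m → FG m r)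
    (hw : ∀ j : Fin m,
      w j ∈ Subgroup.closure (Set.range (aGen m r) ∪ Set.range (bGen m r)))
    (k : FG m r) (hk : expT m r k = Multiplicative.ofAdd 0) :
    ∃ (z : ℤ) (d : ℕ), ∃ n ∈ Nsub m r w, ∃ v ∈ Subgroup.closure (Sset m r d),
      (tGen m r) ^ z * k * (tGen m r) ^ (-z) = n * v := by
  obtain ⟨l, d, n, hn, v, hv, hnv⟩ := zero_exponent_sum_factorization_general
    (closure_insert_tGen_eq_top m r) hw (expT m r) (not_isOfFinOrder_expT_tGen m r)
    (expT_aGen m r) (expT_bGen m r) hk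
  exact ⟨l, d, n, hn, v, hv, by rw [zpow_neg, zpow_natCast, hnv]⟩
end
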